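/- The monic matrix-valued polynomials Q_n(x) = P_n(x)·Γ_n^{-1} satisfy Q_0(x) = I, x·Q_0(x) = Q_1(x) + X_0, and for every n ≥ 1 the three-term recurrence x·Q_n(x) = Q_{n+1}(x) + Q_n(x)·X_n + Q_{n-1}(x)·Y_n, where X_n = Σ_{i=0}^{2ℓ-1} (q^{2n+1}/2)·(1-q^{2i+2})²/((1-q^{2n+2i+2})(1-q^{2n+2i+4}))·E_{i,i+1} + Σ_{i=1}^{2ℓ} (q^{2n+1}/2)·(1-q^{4ℓ-2i+2})²/((1-q^{4ℓ-2i+2n+2})(1-q^{4ℓ-2i+2n+4}))·E_{i,i-1}, and Y_n = Σ_{i=0}^{2ℓ} (1/4)·(1-q^{2n})²(1-q^{4ℓ+2n+2})²/((1-q^{2n+2i})(1-q^{4ℓ+2n-2i})(1-q^{2n+2i+2})(1-q^{4ℓ-2i+2n+2}))·E_{i,i}. -/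

import Mathlib

open Finset Polynomial MeasureTheory Matrix
open scoped BigOperators ComplexOrder

noncomputable section

/-- q-shifted factorial `(a;p)_n`. -/
def qp (a p : ℂ) (n : ℕ) : ℂ := ∏ j ∈ Finset.range n, (1 - a * p ^ j)

/-- q-Racah polynomial `R_n(μ(x);α,β,γ,δ;p)`. -/
def qRacah (p α β γ δ : ℂ) (n x : ℕ) : ℂ :=
  ∑ k ∈ Finset.range (min n x + 1),
    qp (p ^ (-(n : ℤ))) p k * qp (α * β * p ^ (n + 1)) p k *
        qp (p ^ (-(x : ℤ))) p k * qp (γ * δ * p ^ (x + 1)) p k /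
      (qp (α * p) p k * qp (β * δ * p) p k * qp (γ * p) p k * qp p p k) * p ^ k

/-- `IsUltra C` says that for each base `p`, parameter `β` and degree `n`, `C p β n` is
the continuous q-ultraspherical polynomial: it has degree at most `n` and its values at
`(z+z⁻¹)/2` are given by the symmetric Laurent sum. -/
def IsUltra (C : ℂ → ℂ → ℕ → Polynomial ℂ) : Prop :=
  ∀ (p β : ℂ) (n : ℕ),
    (C p β n).degree ≤ (n : ℕ) ∧
      ∀ z : ℂ, z ≠ 0 →
        (C p β n).eval ((z + z⁻¹) / 2) =
          ∑ r ∈ Finset.range (n + 1),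
            qp β p r * qp β p (n - r) / (qp p p r * qp p p (n - r)) * z ^ ((n : ℤ) - 2 * r)

/-- The matrix-valued polynomial `P_n` (entries in `Polynomial ℂ`); here `L = 2ℓ`. -/
def Pm (q : ℂ) (L : ℕ) (C : ℂ → ℂ → ℕ → Polynomial ℂ) (n : ℕ) :
    Matrix (Fin (L + 1)) (Fin (L + 1)) (Polynomial ℂ) :=
  Matrix.of fun i j =>
    ∑ k ∈ Finset.Icc (i : ℕ) (min L (n + (j : ℕ))),
      Polynomial.C
          ((-1 : ℂ) ^ k *
            q ^ ((n : ℤ) + (2 * (k : ℤ) + 1) * ((k : ℤ) - ((i : ℕ) : ℤ)) +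
                ((j : ℕ) : ℤ) * (2 * (k : ℤ) + 1) + 2 * (k : ℤ) * ((L : ℤ) + (n : ℤ) + 1) -
                (k : ℤ) ^ 2) *
            (qp (q ^ 2) (q ^ 2) k * qp (q ^ 2) (q ^ 2) (k + (i : ℕ)) /
              (qp (q ^ 2) (q ^ 2) (2 * k) * qp (q ^ 2) (q ^ 2) (i : ℕ))) *
            (qp (q ^ (-(2 * (L : ℤ)))) (q ^ 2) k *
                qp (q ^ (-(2 * ((j : ℕ) : ℤ) + 2 * (n : ℤ)))) (q ^ 2) k /
              (qp (q ^ 2) (q ^ 2) k * qp (q ^ (2 * (L : ℤ) + 4)) (q ^ 2) k)) *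
            (qp (q ^ 2) (q ^ 2) (n + (j : ℕ) - k) /
              qp (q ^ (4 * (k : ℤ) + 4)) (q ^ 2) (n + (j : ℕ) - k)) *
            qRacah (q ^ 2) 1 1 (q ^ (-(2 * (n : ℤ) + 2 * ((j : ℕ) : ℤ) + 2)))
              (q ^ (-(2 * (L : ℤ) + 2))) k (j : ℕ)) *
        (C (q ^ 2) (q ^ (-(2 * (k : ℤ)))) (k - (i : ℕ)) *
          C (q ^ 2) (q ^ (2 * (k : ℤ) + 2)) (n + (j : ℕ) - k))

/-- Evaluation of the matrix-valued polynomial `P_n` at a point. -/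
def evP (q : ℂ) (L : ℕ) (C : ℂ → ℂ → ℕ → Polynomial ℂ) (n : ℕ) (x : ℂ) :
    Matrix (Fin (L + 1)) (Fin (L + 1)) ℂ :=
  (Pm q L C n).map (Polynomial.eval x)

/-- The coefficients `α_t(m,n)` of the weight. -/
def alphaC (q : ℂ) (L m n t : ℕ) : ℂ :=
  q ^ (2 * (n : ℤ) * ((L : ℤ) + 1) - (n : ℤ) ^ 2 - (2 * (L : ℤ) + 3) * (t : ℤ) + (t : ℤ) ^ 2 -
      (L : ℤ) + (m : ℤ)) *
    ((1 - q ^ (2 * (L : ℤ) + 2)) / (1 - q ^ (2 * (m : ℤ) + 2))) *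
    (qp (q ^ 2) (q ^ 2) (L - n) * qp (q ^ 2) (q ^ 2) n / qp (q ^ 2) (q ^ 2) L) *
    ((-1 : ℂ) ^ ((m : ℤ) - (t : ℤ)) * qp (q ^ (2 * (m : ℤ) - 2 * (L : ℤ))) (q ^ 2) (n - t) /
      qp (q ^ (2 * (m : ℤ) + 4)) (q ^ 2) (n - t)) *
    (qp (q ^ (2 * (L : ℤ) + 4 - 2 * (t : ℤ))) (q ^ 2) t / qp (q ^ 2) (q ^ 2) t)

/-- The matrix weight `W(x)`. -/
def Wm (q : ℂ) (L : ℕ) (x : ℂ) : Matrix (Fin (L + 1)) (Fin (L + 1)) ℂ :=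
  Matrix.of fun i j =>
    ∑ t ∈ Finset.range (max (i : ℕ) (j : ℕ) + 1),
      alphaC q L (min (i : ℕ) (j : ℕ)) (max (i : ℕ) (j : ℕ)) t *
        (Polynomial.Chebyshev.U ℂ
            ((min (i : ℕ) (j : ℕ) : ℤ) + (max (i : ℕ) (j : ℕ) : ℤ) - 2 * (t : ℤ))).eval x

/-- The antidiagonal involution `J`. -/
def Jm (L : ℕ) : Matrix (Fin (L + 1)) (Fin (L + 1)) ℂ :=
  Matrix.of fun i j => if (i : ℕ) + (j : ℕ) = L then 1 else 0

/-- The diagonal leading-coefficient matrix `Γ_n`. -/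
def Gam (q : ℂ) (L n : ℕ) : Matrix (Fin (L + 1)) (Fin (L + 1)) ℂ :=
  Matrix.diagonal fun i =>
    2 ^ n * q ^ n * qp (q ^ (2 * ((i : ℕ) : ℤ) + 2)) (q ^ 2) n *
        qp (q ^ (2 * (L : ℤ) - 2 * ((i : ℕ) : ℤ) + 2)) (q ^ 2) n /
      (qp (q ^ 2) (q ^ 2) n * qp (q ^ (2 * (L : ℤ) + 4)) (q ^ 2) n)

/-- The squared-norm matrix `G_m`. -/
def Gmat (q : ℂ) (L m : ℕ) : Matrix (Fin (L + 1)) (Fin (L + 1)) ℂ :=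
  Matrix.diagonal fun i =>
    q ^ (2 * (m : ℤ) - (L : ℤ)) * (1 - q ^ (2 * (L : ℤ) + 2)) ^ 2 /
      ((1 - q ^ (2 * (m : ℤ) + 2 * ((i : ℕ) : ℤ) + 2)) *
        (1 - q ^ (2 * (L : ℤ) - 2 * ((i : ℕ) : ℤ) + 2 * (m : ℤ) + 2)))

/-- The unipotent lower triangular matrix `L(x)` of the LDU decomposition. -/
def Lm (q : ℂ) (L : ℕ) (C : ℂ → ℂ → ℕ → Polynomial ℂ) (x : ℂ) :
    Matrix (Fin (L + 1)) (Fin (L + 1)) ℂ :=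
  Matrix.of fun m k =>
    if (k : ℕ) ≤ (m : ℕ) then
      q ^ (((m : ℕ) : ℤ) - ((k : ℕ) : ℤ)) * qp (q ^ 2) (q ^ 2) (m : ℕ) *
          qp (q ^ 2) (q ^ 2) (2 * (k : ℕ) + 1) /
          (qp (q ^ 2) (q ^ 2) ((m : ℕ) + (k : ℕ) + 1) * qp (q ^ 2) (q ^ 2) (k : ℕ)) *
        (C (q ^ 2) (q ^ (2 * (k : ℕ) + 2)) ((m : ℕ) - (k : ℕ))).eval x
    else 0

/-- The claimed inverse of `L(x)`. -/
def Linv (q : ℂ) (L : ℕ) (C : ℂ → ℂ → ℕ → Polynomial ℂ) (x : ℂ) :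
    Matrix (Fin (L + 1)) (Fin (L + 1)) ℂ :=
  Matrix.of fun k n =>
    if (n : ℕ) ≤ (k : ℕ) then
      q ^ ((2 * ((k : ℕ) : ℤ) + 1) * (((k : ℕ) : ℤ) - ((n : ℕ) : ℤ))) *
          qp (q ^ 2) (q ^ 2) (k : ℕ) * qp (q ^ 2) (q ^ 2) ((k : ℕ) + (n : ℕ)) /
          (qp (q ^ 2) (q ^ 2) (2 * (k : ℕ)) * qp (q ^ 2) (q ^ 2) (n : ℕ)) *
        (C (q ^ 2) (q ^ (-(2 * ((k : ℕ) : ℤ)))) ((k : ℕ) - (n : ℕ))).eval x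
    else 0

/-- The constants `c_k(ℓ)`. -/
def ckC (q : ℂ) (L k : ℕ) : ℂ :=
  q ^ (-(L : ℤ)) / 4 * (1 - q ^ (4 * k + 2)) * qp (q ^ 2) (q ^ 2) (L + k + 1) *
      qp (q ^ 2) (q ^ 2) (L - k) * qp (q ^ 2) (q ^ 2) k ^ 4 /
    (qp (q ^ 2) (q ^ 2) (2 * k + 1) ^ 2 * qp (q ^ 2) (q ^ 2) L ^ 2)

/-- The diagonal part `T(x)` of the LDU decomposition. -/
def Tm (q : ℂ) (L : ℕ) (x : ℂ) : Matrix (Fin (L + 1)) (Fin (L + 1)) ℂ :=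
  Matrix.diagonal fun k =>
    ckC q L (k : ℕ) *
      (4 * ∏ j ∈ Finset.Icc 1 (k : ℕ), (1 - 2 * (2 * x ^ 2 - 1) * q ^ (2 * j) + q ^ (4 * j)))

/-- The coefficient matrix `M₁(z)` of the q-difference operator `D₁`. -/
def M1f (q : ℂ) (L : ℕ) (z : ℂ) : Matrix (Fin (L + 1)) (Fin (L + 1)) ℂ :=
  Matrix.of fun i j =>
    if (j : ℕ) = (i : ℕ) + 1 then
      -(q ^ (1 - ((i : ℕ) : ℤ)) * (1 - q ^ (2 * (i : ℕ) + 2)) / (1 - q ^ 2) ^ 2 *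
        (z / (1 - z ^ 2)))
    else if (j : ℕ) = (i : ℕ) then
      q ^ (1 - ((i : ℕ) : ℤ)) / (1 - q ^ 2) ^ 2 *
        ((1 - q ^ (2 * (i : ℕ) + 2) * z ^ 2) / (1 - z ^ 2))
    else 0

/-- `M₂(z) = J M₁(z) J`. -/
def M2f (q : ℂ) (L : ℕ) (z : ℂ) : Matrix (Fin (L + 1)) (Fin (L + 1)) ℂ :=
  Jm L * M1f q L z * Jm L

/-- The eigenvalue matrix `Λ_n(1)`. -/
def Lam1 (q : ℂ) (L n : ℕ) : Matrix (Fin (L + 1)) (Fin (L + 1)) ℂ :=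
  Matrix.diagonal fun j =>
    (q ^ (-((j : ℕ) : ℤ) - (n : ℤ) - 1) + q ^ (((j : ℕ) : ℤ) + (n : ℤ) + 1)) / (q⁻¹ - q) ^ 2

/-- The eigenvalue matrix `Λ_n(2) = J Λ_n(1) J`. -/
def Lam2 (q : ℂ) (L n : ℕ) : Matrix (Fin (L + 1)) (Fin (L + 1)) ℂ :=
  Jm L * Lam1 q L n * Jm L

/-- The diagonal coefficient matrix `K₁(z)` of the decoupled operator. -/
def K1f (q : ℂ) (L : ℕ) (z : ℂ) : Matrix (Fin (L + 1)) (Fin (L + 1)) ℂ :=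
  Matrix.diagonal fun i =>
    q ^ (1 - ((i : ℕ) : ℤ)) / (1 - q ^ 2) ^ 2 *
      ((1 - q ^ (2 * (i : ℕ) + 2) * z ^ 2) / (1 - z ^ 2))

/-- The symmetric Laurent polynomial `Ĉ_k(z;β|p)`. -/
def Chat (p β : ℂ) (k : ℕ) (z : ℂ) : ℂ :=
  ∑ r ∈ Finset.range (k + 1),
    qp β p r * qp β p (k - r) / (qp p p r * qp p p (k - r)) * z ^ ((k : ℤ) - 2 * (r : ℤ))

/-- The matrix polynomials `R_n(x) = L(x)ᵀ P_n(x) Γ_n⁻¹`. -/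
def Rmat (q : ℂ) (L : ℕ) (C : ℂ → ℂ → ℕ → Polynomial ℂ) (n : ℕ) (x : ℂ) :
    Matrix (Fin (L + 1)) (Fin (L + 1)) ℂ :=
  (Lm q L C x)ᵀ * evP q L C n x * (Gam q L n)⁻¹


/-- The matrix `X_n` of the monic three-term recurrence. -/
def Xmat (q : ℂ) (L n : ℕ) : Matrix (Fin (L + 1)) (Fin (L + 1)) ℂ :=
  Matrix.of fun i j =>
    if (j : ℕ) = (i : ℕ) + 1 then
      q ^ (2 * n + 1) / 2 * (1 - q ^ (2 * ((i : ℕ) : ℤ) + 2)) ^ 2 /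
        ((1 - q ^ (2 * (n : ℤ) + 2 * ((i : ℕ) : ℤ) + 2)) *
          (1 - q ^ (2 * (n : ℤ) + 2 * ((i : ℕ) : ℤ) + 4)))
    else if (i : ℕ) = (j : ℕ) + 1 then
      q ^ (2 * n + 1) / 2 * (1 - q ^ (2 * (L : ℤ) - 2 * ((i : ℕ) : ℤ) + 2)) ^ 2 /
        ((1 - q ^ (2 * (L : ℤ) - 2 * ((i : ℕ) : ℤ) + 2 * (n : ℤ) + 2)) *
          (1 - q ^ (2 * (L : ℤ) - 2 * ((i : ℕ) : ℤ) + 2 * (n : ℤ) + 4)))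
    else 0

/-- The matrix `Y_n` of the monic three-term recurrence. -/
def Ymat (q : ℂ) (L n : ℕ) : Matrix (Fin (L + 1)) (Fin (L + 1)) ℂ :=
  Matrix.diagonal fun i =>
    1 / 4 * ((1 - q ^ (2 * (n : ℤ))) ^ 2 * (1 - q ^ (2 * (L : ℤ) + 2 * (n : ℤ) + 2)) ^ 2) /
      ((1 - q ^ (2 * (n : ℤ) + 2 * ((i : ℕ) : ℤ))) *
        (1 - q ^ (2 * (L : ℤ) + 2 * (n : ℤ) - 2 * ((i : ℕ) : ℤ))) *
        (1 - q ^ (2 * (n : ℤ) + 2 * ((i : ℕ) : ℤ) + 2)) *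
        (1 - q ^ (2 * (L : ℤ) - 2 * ((i : ℕ) : ℤ) + 2 * (n : ℤ) + 2)))

/-!
`P_n(x) = L(x)⁻ᵀ D_n(x)`, where the triangular factor does not depend on `n` and each entry of `D_n`
is a single `q`-Racah polynomial times a single continuous `q`-ultraspherical polynomial. So it
suffices to prove the recurrence for `D_n`. It holds entrywise: the recurrence of the ultraspherical
factor shifts `n + j`, and a raising and a lowering contiguous relation of the balanced `₄φ₃` in the
`q`-Racah factor distribute this shift over `n` and the column index `j`.

`P_0 = 1` because `D_0 = L(x)ᵀ` by the `q`-Saalschütz sum and `L(x)` is inverse to `Linv(x)`: the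
product of the two is unitriangular and commutes with a triangular band matrix whose diagonal
entries are distinct, which forces it to be the identity.
-/

section Powers

lemma one_sub_pow_ne_zero {R : Type*} [Ring R] {p : R} (hp : ¬IsOfFinOrder p) {m : ℕ}
    (hm : m ≠ 0) : 1 - p ^ m ≠ 0 := fun h =>
  hp (isOfFinOrder_iff_pow_eq_one.mpr ⟨m, Nat.pos_of_ne_zero hm, (sub_eq_zero.mp h).symm⟩)

lemma pow_ne_pow_of_lt {M : Type*} [MonoidWithZero M] [IsCancelMulZero M] {p : M}
    (hp0 : p ≠ 0) (hp : ¬IsOfFinOrder p) {m n : ℕ} (hmn : m < n) : p ^ n ≠ p ^ m := by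
  rw [← Nat.sub_add_cancel hmn.le, pow_add]
  intro h
  have hone : p ^ (n - m) = 1 := mul_right_cancel₀ (pow_ne_zero m hp0) (by rw [h, one_mul])
  exact hp (isOfFinOrder_iff_pow_eq_one.mpr ⟨n - m, Nat.sub_pos_of_lt hmn, hone⟩)

lemma inv_pow_ne_one {G : Type*} [DivisionMonoid G] {p : G} (hp : ¬IsOfFinOrder p) {m : ℕ}
    (hm : m ≠ 0) : (p ^ m)⁻¹ ≠ 1 := fun h =>
  hp (isOfFinOrder_iff_pow_eq_one.mpr ⟨m, Nat.pos_of_ne_zero hm, inv_eq_one.mp h⟩)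

lemma mul_inv_pow_succ {G : Type*} [CommGroupWithZero G] {p : G} (hp0 : p ≠ 0) (m : ℕ) :
    p * (p ^ (m + 1))⁻¹ = (p ^ m)⁻¹ := by
  rw [pow_succ', mul_inv, mul_inv_cancel_left₀ hp0]

lemma not_isOfFinOrder_ofReal {q : ℝ} (hq0 : 0 < q) (hq1 : q < 1) : ¬IsOfFinOrder (q : ℂ) :=
  fun h => hq1.ne (by simpa [abs_of_pos hq0] using h.norm_eq_one)

end Powers

section BandSums

variable {M : Type*} [AddCommMonoid M] {L : ℕ}

lemma sum_ite_eq_add {m d : ℕ} (hm : m ≤ L) (f : ℕ → M) :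
    ∑ i : Fin (L + 1), (if m = i + d then f i else 0) = if d ≤ m then f (m - d) else 0 := by
  rw [Fin.sum_univ_eq_sum_range fun i => if m = i + d then f i else 0]
  split_ifs with h
  · rw [sum_eq_single_of_mem (m - d) (mem_range.mpr (by omega)) fun i _ hi => if_neg (by omega),
      if_pos (by omega)]
  · exact sum_eq_zero fun i _ => if_neg (by omega)

lemma sum_ite_add_eq {i d : ℕ} (f : ℕ → M) (hf : L < i + d → f (i + d) = 0) :
    ∑ k : Fin (L + 1), (if (k : ℕ) = i + d then f k else 0) = f (i + d) := by
  rw [Fin.sum_univ_eq_sum_range fun k => if k = i + d then f k else 0, sum_ite_eq', ite_eq_left_iff,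
    mem_range]
  exact fun h => (hf (by omega)).symm

end BandSums

section Unitriangular

variable {ι R : Type*} [LinearOrder ι] [Fintype ι] [CommRing R] [IsDomain R]

lemma eq_zero_of_commute_of_strictly_lowerTriangular {A N : Matrix ι ι R}
    (hA : A.BlockTriangular OrderDual.toDual) (hinj : Function.Injective A.diag)
    (hN : ∀ i j, i ≤ j → N i j = 0) (h : Commute A N) : N = 0 := by
  suffices ∀ i j, N i j = 0 from Matrix.ext this
  intro i
  induction i using WellFoundedLT.induction with | _ i ihi
  intro j
  induction j using WellFoundedGT.induction with | _ j ihj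
  rcases le_or_gt i j with hij | hij
  · exact hN i j hij
  have hAN : (A * N) i j = A i i * N i j := by
    rw [mul_apply]
    refine sum_eq_single_of_mem i (mem_univ i) fun k _ hk => ?_
    rcases hk.lt_or_gt with hk | hk
    · rw [ihi k hk, mul_zero]
    · rw [hA hk, zero_mul]
  have hNA : (N * A) i j = N i j * A j j := by
    rw [mul_apply]
    refine sum_eq_single_of_mem j (mem_univ j) fun k _ hk => ?_
    rcases hk.lt_or_gt with hk | hk
    · rw [hA hk, mul_zero]
    · rw [ihj k hk, zero_mul]
  have hdiag : A i i - A j j ≠ 0 := sub_ne_zero.mpr (hinj.ne hij.ne')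
  have hcomm : (A i i - A j j) * N i j = 0 := by
    rw [sub_mul, mul_comm (A j j), ← hAN, ← hNA, h.eq, sub_self]
  exact (mul_eq_zero.mp hcomm).resolve_left hdiag

lemma eq_one_of_commute_of_unitriangular {A T : Matrix ι ι R}
    (hA : A.BlockTriangular OrderDual.toDual) (hinj : Function.Injective A.diag)
    (hT : T.BlockTriangular OrderDual.toDual) (hT₁ : ∀ i, T i i = 1) (h : Commute A T) : T = 1 := by
  refine sub_eq_zero.mp (eq_zero_of_commute_of_strictly_lowerTriangular hA hinj
    (fun i j hij => ?_) (h.sub_right (Commute.one_right A)))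
  rcases hij.eq_or_lt with rfl | hij
  · rw [Matrix.sub_apply, hT₁, one_apply_eq, sub_self]
  · rw [Matrix.sub_apply, hT hij, one_apply_ne hij.ne, sub_zero]

end Unitriangular

section QPochhammer

variable {a p : ℂ}

@[simp] lemma qp_zero (a p : ℂ) : qp a p 0 = 1 := by simp [qp]

lemma qp_succ (a p : ℂ) (n : ℕ) : qp a p (n + 1) = qp a p n * (1 - a * p ^ n) :=
  prod_range_succ _ _

lemma qp_succ' (a p : ℂ) (n : ℕ) : qp a p (n + 1) = (1 - a) * qp (a * p) p n := by
  simp only [qp, prod_range_succ', pow_zero, mul_one, pow_succ', ← mul_assoc]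
  ring

lemma qp_self_succ (p : ℂ) (n : ℕ) : qp p p (n + 1) = qp p p n * (1 - p ^ (n + 1)) := by
  rw [qp_succ, pow_succ']

lemma qp_add (a p : ℂ) (m n : ℕ) : qp a p (m + n) = qp a p m * qp (a * p ^ m) p n := by
  simp only [qp, prod_range_add, pow_add, mul_assoc]

lemma one_sub_mul_qp_mul (a p : ℂ) (n : ℕ) :
    (1 - a) * qp (p * a) p n = qp a p n * (1 - a * p ^ n) := by
  rw [mul_comm p, ← qp_succ', qp_succ]

lemma qp_ne_zero_of_le {m n : ℕ} (h : qp a p n ≠ 0) (hmn : m ≤ n) : qp a p m ≠ 0 := by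
  rw [← Nat.add_sub_cancel' hmn, qp_add] at h
  exact left_ne_zero_of_mul h

lemma one_sub_mul_pow_ne_zero {m n : ℕ} (h : qp a p n ≠ 0) (hmn : m < n) : 1 - a * p ^ m ≠ 0 :=
  prod_ne_zero_iff.mp h m (mem_range.mpr hmn)

lemma qp_pow_ne_zero (hp : ¬IsOfFinOrder p) {k : ℕ} (hk : k ≠ 0) (n : ℕ) : qp (p ^ k) p n ≠ 0 := by
  refine prod_ne_zero_iff.mpr fun j _ => ?_
  rw [← pow_add]
  exact one_sub_pow_ne_zero hp (by omega)

lemma qp_self_ne_zero (hp : ¬IsOfFinOrder p) (n : ℕ) : qp p p n ≠ 0 := by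
  simpa using qp_pow_ne_zero hp one_ne_zero n

lemma qp_inv_pow_ne_zero (hp0 : p ≠ 0) (hp : ¬IsOfFinOrder p) {a n : ℕ} (hn : n ≤ a) :
    qp (p ^ a)⁻¹ p n ≠ 0 := by
  refine prod_ne_zero_iff.mpr fun j hj => ?_
  rw [mul_comm, ← div_eq_mul_inv, one_sub_div (pow_ne_zero a hp0)]
  have := pow_ne_pow_of_lt hp0 hp ((mem_range.mp hj).trans_le hn)
  exact div_ne_zero (sub_ne_zero.mpr this) (pow_ne_zero a hp0)

lemma qp_inv_pow_eq_zero (hp0 : p ≠ 0) {a n : ℕ} (hn : a < n) : qp (p ^ a)⁻¹ p n = 0 :=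
  prod_eq_zero (mem_range.mpr hn) (by rw [inv_mul_cancel₀ (pow_ne_zero a hp0), sub_self])

lemma qp_mul_qp_reverse (hp0 : p ≠ 0) {z : ℂ} {m r : ℕ} (h : a * z * p ^ (m + r) = p) :
    qp z p r * qp a p m = (-z) ^ r * p ^ r.choose 2 * qp a p (m + r) := by
  induction r generalizing z with
  | zero => simp
  | succ r ih =>
    have hz : a * p ^ (m + r) * z = 1 :=
      mul_right_cancel₀ hp0 (by linear_combination h)
    have ih' := ih (z := z * p) (by linear_combination h)
    calc qp z p (r + 1) * qp a p m = (1 - z) * (qp (z * p) p r * qp a p m) := by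
          rw [qp_succ', mul_assoc]
      _ = (-z) ^ r * p ^ (r.choose 2 + r) * qp a p (m + r) * (1 - z) := by
          rw [ih', neg_mul_eq_neg_mul, mul_pow]; ring
      _ = (-z) ^ (r + 1) * p ^ (r + 1).choose 2 * qp a p (m + (r + 1)) := by
          rw [Nat.choose_succ_succ' r 1, Nat.choose_one_right, ← add_assoc m, qp_succ, add_comm r]
          linear_combination (-(-z) ^ r * p ^ (r.choose 2 + r) * qp a p (m + r)) * hz

lemma qp_inv_pow_mul_qp_self (hp0 : p ≠ 0) {r N : ℕ} (hr : r ≤ N) :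
    qp (p ^ N)⁻¹ p r * qp p p (N - r) = (-(p ^ N)⁻¹) ^ r * p ^ r.choose 2 * qp p p N := by
  have h := qp_mul_qp_reverse (a := p) (z := (p ^ N)⁻¹) (m := N - r) (r := r) hp0
    (by rw [Nat.sub_add_cancel hr, mul_assoc, inv_mul_cancel₀ (pow_ne_zero N hp0), mul_one])
  rwa [Nat.sub_add_cancel hr] at h

end QPochhammer

section Saalschuetz

variable {p a b c d : ℂ}

/-- The general term of the basic hypergeometric series `₂φ₁(a, b; c; p, z)`. -/
def phi21Term (p a b c z : ℂ) (r : ℕ) : ℂ :=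
  qp a p r * qp b p r / (qp p p r * qp c p r) * z ^ r

lemma phi21Term_succ {z : ℂ} {r : ℕ} (hp : qp p p (r + 1) ≠ 0) (hc : qp c p (r + 1) ≠ 0) :
    phi21Term p a b c z (r + 1) * ((1 - p ^ (r + 1)) * (1 - c * p ^ r)) =
      phi21Term p a b c z r * (z * (1 - a * p ^ r) * (1 - b * p ^ r)) := by
  simp only [phi21Term]
  rw [qp_self_succ] at hp ⊢
  rw [qp_succ] at hc
  obtain ⟨h₁, h₂⟩ := mul_ne_zero_iff.mp hp
  obtain ⟨h₃, h₄⟩ := mul_ne_zero_iff.mp hc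
  simp only [qp_succ, pow_succ _ r]
  rw [pow_succ] at h₂
  rw [mul_comm c] at h₄
  field_simp

lemma qp_div_qp_self_succ {n : ℕ} (hp : qp p p (n + 1) ≠ 0) :
    qp d p (n + 1) / qp p p (n + 1) * (1 - p ^ (n + 1)) =
      qp d p n / qp p p n * (1 - d * p ^ n) := by
  rw [qp_self_succ] at hp ⊢
  obtain ⟨h₁, h₂⟩ := mul_ne_zero_iff.mp hp
  rw [qp_succ]
  field_simp

lemma sum_phi21Term_succ (hp0 : p ≠ 0) (habd : c = a * b * d) {n : ℕ}
    (hp : qp p p (n + 1) ≠ 0) (hc : qp c p (n + 1) ≠ 0) :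
    (1 - p ^ (n + 1)) * (1 - c * p ^ n) *
        ∑ r ∈ range (n + 2), phi21Term p a b c d r * (qp d p (n + 1 - r) / qp p p (n + 1 - r)) =
      (1 - a * d * p ^ n) * (1 - b * d * p ^ n) *
        ∑ r ∈ range (n + 1), phi21Term p a b c d r * (qp d p (n - r) / qp p p (n - r)) := by
  set u := phi21Term p a b c d with hu_def
  set v : ℕ → ℂ := fun s => qp d p s / qp p p s with hv_def
  set G : ℕ → ℂ := fun r =>
    p ^ (n + 1 - r) * u r * (1 - p ^ r) * (1 - c * p ^ r / p) * v (n + 1 - r) with hG_def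
  have key : ∀ r ∈ range (n + 1),
      (1 - p ^ (n + 1)) * (1 - c * p ^ n) * (u r * v (n + 1 - r)) -
        (1 - a * d * p ^ n) * (1 - b * d * p ^ n) * (u r * v (n - r)) = G r - G (r + 1) := by
    intro r hr
    obtain ⟨s, rfl⟩ := Nat.exists_eq_add_of_le (mem_range_succ_iff.mp hr)
    have hu := phi21Term_succ (a := a) (b := b) (z := d)
      (qp_ne_zero_of_le hp (show r + 1 ≤ r + s + 1 by omega)) (qp_ne_zero_of_le hc (by omega))
    have hv : v (s + 1) * (1 - p ^ (s + 1)) = v s * (1 - d * p ^ s) :=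
      qp_div_qp_self_succ (qp_ne_zero_of_le hp (by omega))
    simp only [hG_def, show r + s + 1 - r = s + 1 by omega, show r + s - r = s by omega,
      show r + s + 1 - (r + 1) = s by omega]
    simp only [← hu_def, pow_succ, pow_add] at hu hv ⊢
    generalize v (s + 1) = v₁ at *
    generalize v s = v₀ at *
    field_simp
    subst habd
    linear_combination u r * (1 - a * b * d * p ^ s * (p ^ r) ^ 2) * hv + p ^ s * v₀ * hu
  have hsum := sum_congr rfl key
  rw [sum_sub_distrib, ← mul_sum, ← mul_sum, sum_range_sub'] at hsum
  have h0 : G 0 = 0 := by simp [hG_def]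
  have hn : G (n + 1) = (1 - p ^ (n + 1)) * (1 - c * p ^ n) * (u (n + 1) * v 0) := by
    simp only [hG_def, Nat.sub_self, pow_zero, pow_succ, hv_def, qp_zero]
    field_simp
  rw [sum_range_succ, Nat.sub_self]
  linear_combination hsum + h0 - hn

theorem sum_phi21Term_mul (hp0 : p ≠ 0) (habd : c = a * b * d) {n : ℕ} (hp : qp p p n ≠ 0)
    (hc : qp c p n ≠ 0) :
    ∑ r ∈ range (n + 1), phi21Term p a b c d r * (qp d p (n - r) / qp p p (n - r)) =
      qp (a * d) p n * qp (b * d) p n / (qp p p n * qp c p n) := by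
  induction n with
  | zero => simp [phi21Term]
  | succ n ih =>
    have hrec := sum_phi21Term_succ hp0 habd hp hc
    rw [ih (qp_ne_zero_of_le hp n.le_succ) (qp_ne_zero_of_le hc n.le_succ)] at hrec
    rw [qp_self_succ] at hp
    rw [qp_succ] at hc
    obtain ⟨h₁, h₂⟩ := mul_ne_zero_iff.mp hp
    obtain ⟨h₃, h₄⟩ := mul_ne_zero_iff.mp hc
    rw [qp_self_succ, qp_succ, qp_succ, qp_succ, ← mul_right_inj' (mul_ne_zero h₂ h₄), hrec]
    rw [mul_comm c] at h₄ ⊢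
    field_simp

/-- `q`-Saalschütz: reversing `(d)_{k-r} / (p)_{k-r}` turns the convolution
`sum_phi21Term_mul` into a terminating balanced series. -/
theorem sum_qp_saalschuetz (hp0 : p ≠ 0) (habd : c = a * b * d) {v : ℂ} {k : ℕ}
    (hv : d * v * p ^ k = p) (hp : qp p p k ≠ 0) (hc : qp c p k ≠ 0) (hd : qp d p k ≠ 0)
    (hv' : qp v p k ≠ 0) :
    ∑ r ∈ range (k + 1), qp (p ^ k)⁻¹ p r * qp a p r * qp b p r /
        (qp p p r * qp c p r * qp v p r) * p ^ r =
      qp (a * d) p k * qp (b * d) p k / (qp c p k * qp d p k) := by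
  have hterm : ∀ r ∈ range (k + 1), qp (p ^ k)⁻¹ p r * qp a p r * qp b p r /
        (qp p p r * qp c p r * qp v p r) * p ^ r =
      qp p p k / qp d p k * (phi21Term p a b c d r * (qp d p (k - r) / qp p p (k - r))) := by
    intro r hr
    have hr := mem_range_succ_iff.mp hr
    have h₁ := qp_inv_pow_mul_qp_self hp0 hr
    have h₂ := qp_mul_qp_reverse (a := d) (z := v) (m := k - r) (r := r) hp0
      (by rwa [Nat.sub_add_cancel hr])
    rw [Nat.sub_add_cancel hr] at h₂
    have hvd : (-(p ^ k)⁻¹) ^ r * p ^ r = (-v) ^ r * d ^ r := by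
      rw [← mul_pow, ← mul_pow]
      congr 1
      field_simp
      linear_combination hv
    have h₃ := qp_ne_zero_of_le hp hr
    have h₄ := qp_ne_zero_of_le hc hr
    have h₅ := qp_ne_zero_of_le hv' hr
    have h₆ := qp_ne_zero_of_le hp (Nat.sub_le k r)
    have hpk : (p ^ k)⁻¹ ≠ 0 := inv_ne_zero (pow_ne_zero k hp0)
    generalize (p ^ k)⁻¹ = α at *
    rw [phi21Term]
    field_simp
    have : qp α p r * qp p p (k - r) * p ^ r * qp d p k =
      qp v p r * qp d p (k - r) * d ^ r * qp p p k := by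
      rw [h₁, h₂]
      linear_combination p ^ r.choose 2 * qp p p k * qp d p k * hvd
    linear_combination qp a p r * qp b p r * this
  rw [sum_congr rfl hterm, ← mul_sum, sum_phi21Term_mul hp0 habd hp hc]
  field_simp

end Saalschuetz

section Phi43

variable {p α b y w e u v : ℂ}

/-- The general term of the basic hypergeometric series `₄φ₃(α, b, y, w; e, u, v; p, p)`. -/
def phi43Term (p α b y w e u v : ℂ) (r : ℕ) : ℂ :=
  qp α p r * qp b p r * qp y p r * qp w p r / (qp p p r * qp e p r * qp u p r * qp v p r) * p ^ r

/-- The terminating series `₄φ₃(p⁻ᵏ, b, y, w; e, u, v; p, p)`. -/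
def phi43 (p b y w e u v : ℂ) (k : ℕ) : ℂ :=
  ∑ r ∈ range (k + 1), phi43Term p (p ^ k)⁻¹ b y w e u v r

lemma phi43Term_swap (p α b y w e u v : ℂ) :
    phi43Term p α b y w e u v = phi43Term p α b w y e u v := by
  ext r
  rw [phi43Term, phi43Term, mul_right_comm (qp α p r * qp b p r)]

lemma phi43Term_mul_left (r : ℕ) :
    phi43Term p α b (p * y) w e u v r * (1 - y) =
      phi43Term p α b y w e u v r * (1 - y * p ^ r) := by
  simp only [phi43Term]
  linear_combination qp α p r * qp b p r * qp w p r /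
    (qp p p r * qp e p r * qp u p r * qp v p r) * p ^ r * one_sub_mul_qp_mul y p r

lemma phi43Term_mul_right (r : ℕ) :
    phi43Term p α b y (p * w) e u v r * (1 - w) =
      phi43Term p α b y w e u v r * (1 - w * p ^ r) := by
  rw [phi43Term_swap, phi43Term_mul_left, phi43Term_swap]

lemma phi43Term_mul_lower {r : ℕ} (hu : qp u p r ≠ 0) (hu' : qp (p * u) p r ≠ 0) :
    phi43Term p α b y w e (p * u) v r * (1 - u * p ^ r) =
      phi43Term p α b y w e u v r * (1 - u) := by
  have h := one_sub_mul_qp_mul u p r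
  have hdiv : (1 - u * p ^ r) / qp (p * u) p r = (1 - u) / qp u p r := by
    rw [div_eq_div_iff hu' hu]
    linear_combination -h
  simp only [phi43Term]
  linear_combination qp α p r * qp b p r * qp y p r * qp w p r /
    (qp p p r * qp e p r * qp v p r) * p ^ r * hdiv

lemma phi43Term_contiguous {r : ℕ} (hu : qp u p (r + 1) ≠ 0) :
    (1 - u) * (w - y) * phi43Term p α b y w e u v r =
      (1 - y) * (w - u) * phi43Term p α b (p * y) w e (p * u) v r +
        (u - y) * (1 - w) * phi43Term p α b y (p * w) e (p * u) v r := by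
  have hu₁ := qp_ne_zero_of_le hu r.le_succ
  have hur := one_sub_mul_pow_ne_zero hu r.lt_succ_self
  rw [qp_succ', mul_comm u] at hu
  have hu₂ := right_ne_zero_of_mul hu
  have h₁ := phi43Term_mul_lower (α := α) (b := b) (y := y) (w := w) (e := e) (v := v) hu₁ hu₂
  have h₂ := phi43Term_mul_left (p := p) (α := α) (b := b) (y := y) (w := w) (e := e)
    (u := p * u) (v := v) r
  have h₃ := phi43Term_mul_right (p := p) (α := α) (b := b) (y := y) (w := w) (e := e)
    (u := p * u) (v := v) r
  linear_combination -(w - u) * h₂ - (u - y) * h₃ - (w - y) * h₁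

theorem phi43_contiguous {k : ℕ} (hu : qp u p (k + 1) ≠ 0) :
    (1 - u) * (w - y) * phi43 p b y w e u v k =
      (1 - y) * (w - u) * phi43 p b (p * y) w e (p * u) v k +
        (u - y) * (1 - w) * phi43 p b y (p * w) e (p * u) v k := by
  simp only [phi43, mul_sum, ← sum_add_distrib]
  exact sum_congr rfl fun r hr =>
    phi43Term_contiguous (qp_ne_zero_of_le hu (Nat.succ_le_of_lt (mem_range.mp hr)))

lemma phi43Term_mul_all {r : ℕ} (hu : qp u p r ≠ 0)
    (hyu : qp (p * u) p r = 0 → qp (p * y) p r = 0) :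
    phi43Term p α b (p * y) (p * w) e (p * u) v r * ((1 - u * p ^ r) * (1 - y) * (1 - w)) =
      phi43Term p α b y w e u v r * ((1 - u) * (1 - y * p ^ r) * (1 - w * p ^ r)) := by
  by_cases hu' : qp (p * u) p r = 0
  · have hy : qp y p r * (1 - y * p ^ r) = 0 := by rw [← one_sub_mul_qp_mul, hyu hu', mul_zero]
    simp only [phi43Term, hu', hyu hu']
    linear_combination -(qp α p r * qp b p r * qp w p r /
      (qp p p r * qp e p r * qp u p r * qp v p r) * p ^ r * (1 - u) * (1 - w * p ^ r)) * hy
  · have h₁ := phi43Term_mul_lower (α := α) (b := b) (y := p * y) (w := p * w) (e := e) (v := v)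
      hu hu'
    have h₂ := phi43Term_mul_left (p := p) (α := α) (b := b) (y := y) (w := p * w) (e := e)
      (u := u) (v := v) r
    have h₃ := phi43Term_mul_right (p := p) (α := α) (b := b) (y := y) (w := w) (e := e)
      (u := u) (v := v) r
    linear_combination (1 - y) * (1 - w) * h₁ + (1 - u) * (1 - w) * h₂ +
      (1 - u) * (1 - y * p ^ r) * h₃

lemma phi43Term_succ {r : ℕ} (hp : qp p p (r + 1) ≠ 0) (he : qp e p (r + 1) ≠ 0)
    (hu : qp u p (r + 1) ≠ 0) (hv : qp v p (r + 1) ≠ 0) :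
    phi43Term p α b y w e u v (r + 1) *
        ((1 - p ^ (r + 1)) * (1 - e * p ^ r) * (1 - v * p ^ r) * (1 - u)) =
      phi43Term p α b (p * y) (p * w) e (p * u) v r *
        (p * (1 - α * p ^ r) * (1 - b * p ^ r) * (1 - y) * (1 - w)) := by
  simp only [phi43Term]
  rw [qp_succ' u, mul_comm u] at hu ⊢
  rw [qp_succ' y, qp_succ' w, mul_comm y, mul_comm w]
  rw [qp_self_succ] at hp ⊢
  rw [qp_succ] at he hv
  rw [qp_succ α, qp_succ b, qp_succ e, qp_succ v]
  simp only [pow_succ p r] at hp ⊢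
  have hden := mul_ne_zero (mul_ne_zero (mul_ne_zero hp he) hu) hv
  have hden' := mul_ne_zero (mul_ne_zero (mul_ne_zero (left_ne_zero_of_mul hp)
    (left_ne_zero_of_mul he)) (right_ne_zero_of_mul hu)) (left_ne_zero_of_mul hv)
  rw [div_mul_eq_mul_div, div_mul_eq_mul_div, div_mul_eq_mul_div, div_mul_eq_mul_div,
    div_eq_div_iff hden hden']
  ring

lemma phi43Term_telescope (hp0 : p ≠ 0) (hy : y ≠ 1) (hw : w ≠ 1) {r : ℕ}
    (hp : qp p p (r + 1) ≠ 0) (he : qp e p (r + 1) ≠ 0) (hu : qp u p (r + 1) ≠ 0)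
    (hv : qp v p (r + 1) ≠ 0) :
    p * e * (w - y) * u * (1 - α * p ^ r) * (1 - b * p ^ r) / p ^ r *
        phi43Term p α b (p * y) (p * w) e (p * u) v r =
      (1 - u) * (w - y) * e * u / ((1 - y) * (1 - w)) * (1 - p ^ (r + 1)) *
        (p - e * p ^ (r + 1)) * (1 - v * p ^ (r + 1) / p) / p ^ (r + 1) *
          phi43Term p α b y w e u v (r + 1) := by
  have h := phi43Term_succ (α := α) (b := b) (y := y) (w := w) hp he hu hv
  have hy' : 1 - y ≠ 0 := sub_ne_zero.mpr hy.symm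
  have hw' : 1 - w ≠ 0 := sub_ne_zero.mpr hw.symm
  simp only [pow_succ] at h ⊢
  field_simp
  linear_combination -e * (w - y) * u * h

/-- The summand of `phi43_contiguous_balanced`, split as a shifted minus an unshifted term: the
two parts telescope by `phi43Term_telescope`. -/
lemma phi43Term_contiguous_balanced (hp0 : p ≠ 0) (hy : y ≠ 1) (hw : w ≠ 1)
    (hbal : α * b * p ^ 2 * y * w = e * u * v) {r : ℕ} (hu : qp u p r ≠ 0)
    (hyu : qp (p * u) p r = 0 → qp (p * y) p r = 0) :
    p * e * (u - α) * (u - b) * (w - y) * phi43Term p α b (p * y) (p * w) e (p * u) v r -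
        (u - 1) * ((p * w - e) * (e * u - α * b * p * y) * phi43Term p α b (p * y) w e u v r -
          (p * y - e) * (e * u - α * b * p * w) * phi43Term p α b y (p * w) e u v r) =
      p * e * (w - y) * u * (1 - α * p ^ r) * (1 - b * p ^ r) / p ^ r *
          phi43Term p α b (p * y) (p * w) e (p * u) v r -
        (1 - u) * (w - y) * e * u / ((1 - y) * (1 - w)) * (1 - p ^ r) * (p - e * p ^ r) *
          (1 - v * p ^ r / p) / p ^ r * phi43Term p α b y w e u v r := by
  have hT := phi43Term_mul_all (α := α) (b := b) (w := w) (e := e) (v := v) hu hyu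
  have h₁ := phi43Term_mul_left (p := p) (α := α) (b := b) (y := y) (w := w) (e := e)
    (u := u) (v := v) r
  have h₂ := phi43Term_mul_right (p := p) (α := α) (b := b) (y := y) (w := w) (e := e)
    (u := u) (v := v) r
  have hy' : 1 - y ≠ 0 := sub_ne_zero.mpr hy.symm
  have hw' : 1 - w ≠ 0 := sub_ne_zero.mpr hw.symm
  have hP : p ^ r ≠ 0 := pow_ne_zero r hp0
  generalize phi43Term p α b (p * y) (p * w) e (p * u) v r = T at *
  generalize phi43Term p α b y w e u v r = τ at *
  generalize p ^ r = P at *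
  rw [eq_div_of_mul_eq hy' h₁, eq_div_of_mul_eq hw' h₂]
  field_simp
  linear_combination p ^ 2 * e * (w - y) * (α * b * P - u) * hT +
    (w - y) * τ * (1 - u) * (1 - P) * (p - e * P) * P * hbal

theorem phi43_contiguous_balanced (hp0 : p ≠ 0) (hy : y ≠ 1) (hw : w ≠ 1) {k : ℕ}
    (hbal : (p ^ k)⁻¹ * b * p ^ 2 * y * w = e * u * v) (hp : qp p p k ≠ 0) (he : qp e p k ≠ 0)
    (hu : qp u p k ≠ 0) (hv : qp v p k ≠ 0) (hyu : qp (p * u) p k = 0 → qp (p * y) p k = 0) :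
    p * e * (u - (p ^ k)⁻¹) * (u - b) * (w - y) * phi43 p b (p * y) (p * w) e (p * u) v k =
      (u - 1) * ((p * w - e) * (e * u - (p ^ k)⁻¹ * b * p * y) * phi43 p b (p * y) w e u v k -
        (p * y - e) * (e * u - (p ^ k)⁻¹ * b * p * w) * phi43 p b y (p * w) e u v k) := by
  set α := (p ^ k)⁻¹ with hα
  set A : ℕ → ℂ := fun r => p * e * (w - y) * u * (1 - α * p ^ r) * (1 - b * p ^ r) / p ^ r *
    phi43Term p α b (p * y) (p * w) e (p * u) v r with hA
  set G : ℕ → ℂ := fun r => (1 - u) * (w - y) * e * u / ((1 - y) * (1 - w)) * (1 - p ^ r) *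
    (p - e * p ^ r) * (1 - v * p ^ r / p) / p ^ r * phi43Term p α b y w e u v r with hG
  have hterm : ∀ r ∈ range (k + 1),
      p * e * (u - α) * (u - b) * (w - y) * phi43Term p α b (p * y) (p * w) e (p * u) v r -
        (u - 1) * ((p * w - e) * (e * u - α * b * p * y) * phi43Term p α b (p * y) w e u v r -
          (p * y - e) * (e * u - α * b * p * w) * phi43Term p α b y (p * w) e u v r) =
      A r - G r := by
    intro r hr
    have hr := mem_range_succ_iff.mp hr
    refine phi43Term_contiguous_balanced hp0 hy hw hbal (qp_ne_zero_of_le hu hr) fun h => ?_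
    obtain rfl | hlt := hr.eq_or_lt
    · exact hyu h
    · refine absurd ?_ (qp_ne_zero_of_le hu hlt)
      rw [qp_succ', mul_comm u, h, mul_zero]
  have hAG : ∀ r ∈ range k, A r = G (r + 1) := by
    intro r hr
    have hr := Nat.succ_le_of_lt (mem_range.mp hr)
    exact phi43Term_telescope hp0 hy hw (qp_ne_zero_of_le hp hr) (qp_ne_zero_of_le he hr)
      (qp_ne_zero_of_le hu hr) (qp_ne_zero_of_le hv hr)
  have hA0 : A k = 0 := by simp [hA, hα, inv_mul_cancel₀ (pow_ne_zero k hp0)]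
  have hG0 : G 0 = 0 := by simp [hG]
  have hsum := sum_congr rfl hterm
  rw [sum_sub_distrib A, sum_range_succ A, sum_range_succ' G, sum_congr rfl hAG, hA0, hG0,
    sub_self] at hsum
  simp only [sum_sub_distrib, ← mul_sum] at hsum
  exact sub_eq_zero.mp hsum

end Phi43

section Racah

variable {p : ℂ}

/-- The `q`-Racah polynomial `R_k(μ(j); 1, 1, p^{-n-j-1}, p^{-L-1}; p)` entering `P_n`, summed up to
`k` (the terms beyond `min k j` vanish). -/
def racah (p : ℂ) (L n j k : ℕ) : ℂ :=
  phi43 p (p ^ (k + 1)) (p ^ j)⁻¹ (p ^ (n + L + 1))⁻¹ p (p ^ (n + j))⁻¹ (p ^ L)⁻¹ k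

lemma qRacah_eq_racah (hp0 : p ≠ 0) (L n j k : ℕ) :
    qRacah p 1 1 (p ^ (n + j + 1))⁻¹ (p ^ (L + 1))⁻¹ k j = racah p L n j k := by
  have hγδ : (p ^ (n + j + 1))⁻¹ * (p ^ (L + 1))⁻¹ * p ^ (j + 1) = (p ^ (n + L + 1))⁻¹ := by
    field_simp
    ring
  have hγ : (p ^ (n + j + 1))⁻¹ * p = (p ^ (n + j))⁻¹ := by
    rw [mul_comm, mul_inv_pow_succ hp0]
  have hδ : (p ^ (L + 1))⁻¹ * p = (p ^ L)⁻¹ := by rw [mul_comm, mul_inv_pow_succ hp0]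
  simp only [qRacah, racah, phi43, _root_.zpow_neg, zpow_natCast, one_mul, hγδ, hγ, hδ]
  refine sum_subset_zero_on_sdiff (range_mono (by omega)) (fun r hr => ?_) fun r _ => ?_
  · have hjr : j < r := by
      simp only [mem_sdiff, mem_range] at hr
      omega
    simp [phi43Term, qp_inv_pow_eq_zero hp0 hjr]
  · rw [phi43Term, mul_right_comm (qp (p ^ k)⁻¹ p r * _),
      mul_right_comm (qp p p r) _ (qp (p ^ (n + j))⁻¹ p r), mul_right_comm _ _ (qp p p r),
      mul_right_comm (qp p p r) _ (qp p p r)]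

theorem racah_raising (hp0 : p ≠ 0) (hp : ¬IsOfFinOrder p) {n j l k : ℕ} (hkN : k ≤ n + j + 1)
    (hkL : k ≤ j + l) :
    (1 - p ^ (n + j + 1) * (p ^ k)⁻¹) * (1 - p ^ (n + j + k + 2)) * (1 - p ^ (l + n + 1)) *
        racah p (j + l) n j k =
      (1 - p ^ (n + j + 1)) *
        ((1 - p ^ (n + 1)) * (1 - p ^ (j + l + n + 2)) * racah p (j + l) (n + 1) j k +
          p ^ (n + 1) * (1 - p ^ l) * (1 - p ^ (j + 1)) * racah p (j + l) n (j + 1) k) := by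
  have h := phi43_contiguous_balanced (p := p) (b := p ^ (k + 1)) (y := (p ^ (j + 1))⁻¹)
    (w := (p ^ (n + (j + l) + 1 + 1))⁻¹) (e := p) (u := (p ^ (n + j + 1))⁻¹) (v := (p ^ (j + l))⁻¹)
    hp0 (inv_pow_ne_one hp j.succ_ne_zero) (inv_pow_ne_one hp (Nat.succ_ne_zero _)) (k := k)
    (by field_simp; ring) (qp_self_ne_zero hp k) (qp_self_ne_zero hp k)
    (qp_inv_pow_ne_zero hp0 hp hkN) (qp_inv_pow_ne_zero hp0 hp hkL) fun h => by
      rw [mul_inv_pow_succ hp0] at h ⊢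
      have hk : n + j < k := not_le.mp fun hle => qp_inv_pow_ne_zero hp0 hp hle h
      exact qp_inv_pow_eq_zero hp0 (by omega)
  simp only [mul_inv_pow_succ hp0] at h
  have hn : racah p (j + l) (n + 1) j k = phi43 p (p ^ (k + 1)) (p ^ j)⁻¹
      (p ^ (n + (j + l) + 1 + 1))⁻¹ p (p ^ (n + j + 1))⁻¹ (p ^ (j + l))⁻¹ k := by
    simp only [racah, add_right_comm n 1]
  change _ * racah p (j + l) n j k =
    _ * (_ * _ * phi43 p _ _ _ p _ _ k - _ * _ * racah p (j + l) n (j + 1) k) at h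
  rw [← hn] at h
  clear hn
  have hpow : p ^ (4 + 2 * n + 4 * j + l) ≠ 0 := pow_ne_zero _ hp0
  field_simp at h ⊢
  rw [← mul_right_inj' hpow]
  linear_combination h

theorem racah_lowering (hp0 : p ≠ 0) (hp : ¬IsOfFinOrder p) {n j l k : ℕ} (hk : k < n + j) :
    (1 - p ^ (n + j)) * (1 - p ^ (l + n + 1)) * racah p (j + l) n j k =
      p ^ n * (1 - p ^ j) * (1 - p ^ (l + 1)) * racah p (j + l) n (j - 1) k +
        (1 - p ^ n) * (1 - p ^ (j + l + n + 1)) * racah p (j + l) (n - 1) j k := by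
  have h := phi43_contiguous (b := p ^ (k + 1)) (y := (p ^ j)⁻¹)
    (w := (p ^ (n + (j + l) + 1))⁻¹) (e := p) (v := (p ^ (j + l))⁻¹)
    (qp_inv_pow_ne_zero hp0 hp (Nat.succ_le_of_lt hk))
  have hj : (1 - p ^ j) * phi43 p (p ^ (k + 1)) (p * (p ^ j)⁻¹) (p ^ (n + (j + l) + 1))⁻¹ p
      (p * (p ^ (n + j))⁻¹) (p ^ (j + l))⁻¹ k = (1 - p ^ j) * racah p (j + l) n (j - 1) k := by
    cases j with
    | zero => simp
    | succ j => simp only [← add_assoc, mul_inv_pow_succ hp0, racah, Nat.add_sub_cancel]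
  have hn : (1 - p ^ n) * phi43 p (p ^ (k + 1)) (p ^ j)⁻¹ (p * (p ^ (n + (j + l) + 1))⁻¹) p
      (p * (p ^ (n + j))⁻¹) (p ^ (j + l))⁻¹ k = (1 - p ^ n) * racah p (j + l) (n - 1) j k := by
    cases n with
    | zero => simp
    | succ n =>
      simp only [add_right_comm n 1, mul_inv_pow_succ hp0, racah, Nat.add_sub_cancel]
  change _ * racah p (j + l) n j k = _ at h
  have hpow : p ^ j ≠ 0 := pow_ne_zero j hp0
  generalize phi43 p _ (p * (p ^ j)⁻¹) _ p _ _ k = φ₁ at h hj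
  generalize phi43 p _ _ (p * (p ^ (n + (j + l) + 1))⁻¹) p _ _ k = φ₂ at h hn
  field_simp at h
  rw [← mul_right_inj' hpow]
  linear_combination -h + p ^ n * p ^ j * (1 - p ^ (l + 1)) * hj +
    p ^ j * (1 - p ^ (j + l + n + 1)) * hn

end Racah

section RacahZero

variable {p : ℂ}

lemma qp_inv_pow (hp0 : p ≠ 0) (hp : ¬IsOfFinOrder p) {k m : ℕ} :
    qp (p ^ (m + k))⁻¹ p k = (-(p ^ (m + k))⁻¹) ^ k * p ^ k.choose 2 * qp (p ^ (m + 1)) p k := by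
  have h := qp_inv_pow_mul_qp_self hp0 (Nat.le_add_left k m)
  rw [Nat.add_sub_cancel, qp_add, ← pow_succ'] at h
  refine mul_right_cancel₀ (qp_self_ne_zero hp m) (h.trans ?_)
  ring

lemma racah_zero (hp0 : p ≠ 0) (hp : ¬IsOfFinOrder p) {m j k : ℕ} (hkj : k ≤ j) :
    racah p (m + k) 0 j k =
      qp (p ^ (m + k + 2)) p k * qp (p ^ k)⁻¹ p k / (qp p p k * qp (p ^ (m + 1)) p k) := by
  have hsum := sum_qp_saalschuetz (a := p ^ (k + 1)) (b := (p ^ (m + k + 1))⁻¹) (c := p)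
    (d := p ^ (m + 1)) (v := (p ^ (m + k))⁻¹) hp0 (by field_simp; ring) (by field_simp; ring)
    (qp_self_ne_zero hp k) (qp_self_ne_zero hp k) (qp_pow_ne_zero hp m.succ_ne_zero k)
    (qp_inv_pow_ne_zero hp0 hp (Nat.le_add_left k m))
  rw [show p ^ (k + 1) * p ^ (m + 1) = p ^ (m + k + 2) by ring,
    show (p ^ (m + k + 1))⁻¹ * p ^ (m + 1) = (p ^ k)⁻¹ by field_simp; ring] at hsum
  rw [← hsum, racah, phi43]
  refine sum_congr rfl fun r hr => ?_
  have hr : qp (p ^ j)⁻¹ p r ≠ 0 :=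
    qp_inv_pow_ne_zero hp0 hp ((mem_range_succ_iff.mp hr).trans hkj)
  rw [phi43Term, zero_add, zero_add, mul_right_comm _ _ (qp (p ^ (m + k + 1))⁻¹ p r),
    mul_right_comm _ _ (qp (p ^ (m + k))⁻¹ p r), mul_div_mul_right _ _ hr]

lemma normalized_racah_zero (hp0 : p ≠ 0) (hp : ¬IsOfFinOrder p) {L j k : ℕ} (hkj : k ≤ j)
    (hkL : k ≤ L) :
    p ^ ((L + 1) * k) * qp (p ^ L)⁻¹ p k / qp (p ^ (L + 2)) p k * racah p L 0 j k = 1 := by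
  obtain ⟨m, rfl⟩ := Nat.exists_eq_add_of_le' hkL
  have hk := qp_inv_pow hp0 hp (k := k) (m := 0)
  rw [zero_add, zero_add, pow_one] at hk
  have h₁ := qp_self_ne_zero hp k
  have h₂ := qp_pow_ne_zero hp m.succ_ne_zero k
  have h₃ := qp_pow_ne_zero hp (m + k + 1).succ_ne_zero k
  have hpow : p ^ ((m + k + 1) * k) * ((-(p ^ (m + k))⁻¹) ^ k * (-(p ^ k)⁻¹) ^ k) *
      (p ^ k.choose 2) ^ 2 = 1 := by
    rw [← mul_pow, neg_mul_neg, ← pow_mul, Nat.choose_two_right,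
      Nat.div_mul_cancel (Nat.even_mul_pred_self k).two_dvd]
    cases k with
    | zero => simp
    | succ k =>
      rw [Nat.add_sub_cancel, mul_pow, inv_pow, inv_pow, ← pow_mul, ← pow_mul]
      field_simp
      ring
  rw [racah_zero hp0 hp hkj, qp_inv_pow hp0 hp, hk]
  rw [Nat.succ_eq_add_one] at h₂ h₃
  field_simp
  linear_combination hpow

end RacahZero

section Ultraspherical

variable {C : ℂ → ℂ → ℕ → Polynomial ℂ} {p : ℂ}

/-- The `q`-binomial series `∑ (β;p)_r / (p;p)_r t^r`; the continuous `q`-ultraspherical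
polynomials have generating function `qBinomialSeries β p (z t) * qBinomialSeries β p (z⁻¹ t)`. -/
def qBinomialSeries (β p : ℂ) : PowerSeries ℂ :=
  PowerSeries.mk fun r => qp β p r / qp p p r

lemma one_sub_X_mul_qBinomialSeries (hp : ¬IsOfFinOrder p) (β : ℂ) :
    (1 - PowerSeries.X) * qBinomialSeries β p =
      (1 - PowerSeries.C β * PowerSeries.X) * PowerSeries.rescale p (qBinomialSeries β p) := by
  ext (_ | r)
  · simp [qBinomialSeries, PowerSeries.rescale_mk, PowerSeries.constantCoeff_mk]
  · have h₁ := one_sub_pow_ne_zero hp r.succ_ne_zero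
    have h₂ := qp_self_ne_zero hp r
    simp only [qBinomialSeries, sub_mul, one_mul, mul_assoc, map_sub, PowerSeries.coeff_mk,
      PowerSeries.coeff_succ_X_mul, PowerSeries.coeff_C_mul, PowerSeries.coeff_rescale,
      qp_succ β, qp_self_succ]
    field_simp
    ring

lemma rescale_qBinomialSeries_mul (hp : ¬IsOfFinOrder p) (β : ℂ) {y z c : ℂ} (hzy : z * y = 1)
    (hc : z + y = c) {Φ : PowerSeries ℂ} (hΦ : Φ = PowerSeries.rescale z (qBinomialSeries β p) *
      PowerSeries.rescale y (qBinomialSeries β p)) :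
    Φ - PowerSeries.C c * (PowerSeries.X * Φ) + PowerSeries.X ^ 2 * Φ =
      PowerSeries.rescale p Φ -
        PowerSeries.C (β * c) * (PowerSeries.X * PowerSeries.rescale p Φ) +
        PowerSeries.C (β ^ 2) * (PowerSeries.X ^ 2 * PowerSeries.rescale p Φ) := by
  have key (w : ℂ) := congrArg (PowerSeries.rescale w) (one_sub_X_mul_qBinomialSeries hp β)
  have hz := key z
  have hy := key y
  have hC : PowerSeries.C z * PowerSeries.C y = 1 := by rw [← map_mul, hzy, map_one]
  have hcomm (w : ℂ) (f : PowerSeries ℂ) : PowerSeries.rescale w (PowerSeries.rescale p f) =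
      PowerSeries.rescale p (PowerSeries.rescale w f) := by
    rw [PowerSeries.rescale_rescale, PowerSeries.rescale_rescale, mul_comm]
  have hresC (w : ℂ) : PowerSeries.rescale w (PowerSeries.C β) = PowerSeries.C β := by
    ext n
    rw [PowerSeries.coeff_rescale, PowerSeries.coeff_C]
    split_ifs with hn <;> simp [hn]
  simp only [map_mul, map_sub, map_one, PowerSeries.rescale_X, hresC,
    hcomm] at hz hy
  rw [hΦ, ← hc]
  simp only [map_mul, map_add, map_pow]
  linear_combination
    (1 - PowerSeries.C y * PowerSeries.X) * PowerSeries.rescale y (qBinomialSeries β p) * hz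
    + (1 - PowerSeries.C β * (PowerSeries.C z * PowerSeries.X)) *
      PowerSeries.rescale p (PowerSeries.rescale z (qBinomialSeries β p)) * hy
    + PowerSeries.X ^ 2 * (PowerSeries.C β ^ 2 *
      PowerSeries.rescale p (PowerSeries.rescale z (qBinomialSeries β p)) *
      PowerSeries.rescale p (PowerSeries.rescale y (qBinomialSeries β p)) -
      PowerSeries.rescale z (qBinomialSeries β p) * PowerSeries.rescale y (qBinomialSeries β p)) *
      hC

lemma IsUltra.exists_eval_eq_coeff (hC : IsUltra C) (x : ℂ) :
    ∃ z y : ℂ, z * y = 1 ∧ z + y = 2 * x ∧ ∀ p β n, (C p β n).eval x =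
      PowerSeries.coeff n (PowerSeries.rescale z (qBinomialSeries β p) *
        PowerSeries.rescale y (qBinomialSeries β p)) := by
  obtain ⟨s, hs⟩ := IsAlgClosed.exists_eq_mul_self (x ^ 2 - 1)
  have hzy : (x + s) * (x - s) = 1 := by linear_combination hs
  have hz : x + s ≠ 0 := left_ne_zero_of_mul_eq_one hzy
  have hy : (x + s)⁻¹ = x - s := inv_eq_of_mul_eq_one_right hzy
  refine ⟨x - s, x + s, by rw [mul_comm, hzy], by ring, fun p β n => ?_⟩
  have hx : (x + s + (x + s)⁻¹) / 2 = x := by rw [hy]; ring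
  rw [← congrArg (fun t => (C p β n).eval t) hx, (hC p β n).2 _ hz, PowerSeries.coeff_mul,
    Nat.sum_antidiagonal_eq_sum_range_succ_mk]
  refine sum_congr rfl fun r hr => ?_
  have hr := mem_range.mp hr
  have hexp : (x + s) ^ ((n : ℤ) - 2 * r) = (x + s) ^ (n - r) * (x - s) ^ r := by
    rw [← hy, inv_pow, ← zpow_natCast, ← zpow_natCast, ← div_eq_mul_inv, ← zpow_sub₀ hz]
    congr 1
    omega
  simp only [PowerSeries.coeff_rescale, qBinomialSeries, PowerSeries.coeff_mk, hexp]
  rw [← div_mul_div_comm]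
  ring

lemma IsUltra.eval_zero (hC : IsUltra C) (p β x : ℂ) : (C p β 0).eval x = 1 := by
  obtain ⟨z, y, -, -, h⟩ := hC.exists_eval_eq_coeff x
  simp [h, qBinomialSeries, PowerSeries.rescale_mk, PowerSeries.constantCoeff_mk]

lemma IsUltra.eval_one (hC : IsUltra C) (hp : ¬IsOfFinOrder p) (β x : ℂ) :
    (1 - p) * (C p β 1).eval x = 2 * x * (1 - β) := by
  obtain ⟨z, y, hzy, hx, h⟩ := hC.exists_eval_eq_coeff x
  have key := congrArg (PowerSeries.coeff 1) (rescale_qBinomialSeries_mul hp β hzy hx rfl)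
  simp only [map_sub, map_add, PowerSeries.coeff_C_mul, PowerSeries.coeff_succ_X_mul,
    PowerSeries.coeff_X_pow_mul', PowerSeries.coeff_rescale, ← h, hC.eval_zero] at key
  norm_num at key
  linear_combination key

lemma IsUltra.eval_add_two (hC : IsUltra C) (hp : ¬IsOfFinOrder p) (β x : ℂ) (n : ℕ) :
    (1 - p ^ (n + 2)) * (C p β (n + 2)).eval x =
      2 * x * (1 - β * p ^ (n + 1)) * (C p β (n + 1)).eval x -
        (1 - β ^ 2 * p ^ n) * (C p β n).eval x := by
  obtain ⟨z, y, hzy, hx, h⟩ := hC.exists_eval_eq_coeff x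
  have key := congrArg (PowerSeries.coeff (n + 2)) (rescale_qBinomialSeries_mul hp β hzy hx rfl)
  simp only [map_sub, map_add, PowerSeries.coeff_C_mul, PowerSeries.coeff_succ_X_mul,
    PowerSeries.coeff_X_pow_mul, PowerSeries.coeff_rescale, ← h] at key
  linear_combination key

end Ultraspherical

section TriangularFactors

variable {q : ℂ} {C : ℂ → ℂ → ℕ → Polynomial ℂ}

/-- The entry `(m, k)` of the lower triangular factor `Lm`, indexed by natural numbers. -/
def lowerEntry (q : ℂ) (C : ℂ → ℂ → ℕ → Polynomial ℂ) (x : ℂ) (m k : ℕ) : ℂ :=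
  if k ≤ m then
    q ^ (m - k) * qp (q ^ 2) (q ^ 2) m * qp (q ^ 2) (q ^ 2) (2 * k + 1) /
        (qp (q ^ 2) (q ^ 2) (m + k + 1) * qp (q ^ 2) (q ^ 2) k) *
      (C (q ^ 2) ((q ^ 2) ^ (k + 1)) (m - k)).eval x
  else 0

/-- The entry `(k, i)` of the inverse factor `Linv`, indexed by natural numbers. -/
def lowerInvEntry (q : ℂ) (C : ℂ → ℂ → ℕ → Polynomial ℂ) (x : ℂ) (k i : ℕ) : ℂ :=
  if i ≤ k then
    ((q ^ 2) ^ k * q) ^ (k - i) * qp (q ^ 2) (q ^ 2) k * qp (q ^ 2) (q ^ 2) (k + i) /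
        (qp (q ^ 2) (q ^ 2) (2 * k) * qp (q ^ 2) (q ^ 2) i) *
      (C (q ^ 2) ((q ^ 2) ^ k)⁻¹ (k - i)).eval x
  else 0

lemma lowerEntry_of_lt (x : ℂ) {m k : ℕ} (h : m < k) : lowerEntry q C x m k = 0 :=
  if_neg h.not_ge

lemma lowerInvEntry_of_lt (x : ℂ) {k i : ℕ} (h : k < i) : lowerInvEntry q C x k i = 0 :=
  if_neg h.not_ge

lemma lowerEntry_self (hq : ¬IsOfFinOrder (q ^ 2)) (hC : IsUltra C) (x : ℂ) (k : ℕ) :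
    lowerEntry q C x k k = 1 := by
  have h₁ := qp_self_ne_zero hq k
  have h₂ := qp_self_ne_zero hq (k + k + 1)
  rw [lowerEntry, if_pos le_rfl, Nat.sub_self, hC.eval_zero, pow_zero, two_mul]
  field_simp

lemma lowerInvEntry_self (hq : ¬IsOfFinOrder (q ^ 2)) (hC : IsUltra C) (x : ℂ) (k : ℕ) :
    lowerInvEntry q C x k k = 1 := by
  have h₁ := qp_self_ne_zero hq k
  have h₂ := qp_self_ne_zero hq (k + k)
  rw [lowerInvEntry, if_pos le_rfl, Nat.sub_self, hC.eval_zero, pow_zero, two_mul]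
  field_simp

lemma lowerEntry_add (x : ℂ) (k d : ℕ) :
    lowerEntry q C x (k + d) k =
      q ^ d * qp (q ^ 2) (q ^ 2) (k + d) * qp (q ^ 2) (q ^ 2) (2 * k + 1) /
          (qp (q ^ 2) (q ^ 2) (2 * k + 1 + d) * qp (q ^ 2) (q ^ 2) k) *
        (C (q ^ 2) ((q ^ 2) ^ (k + 1)) d).eval x := by
  rw [lowerEntry, if_pos (Nat.le_add_right k d), Nat.add_sub_cancel_left,
    show k + d + k + 1 = 2 * k + 1 + d by omega]

lemma lowerInvEntry_add (x : ℂ) (i d : ℕ) :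
    lowerInvEntry q C x (i + d) i =
      ((q ^ 2) ^ (i + d) * q) ^ d * qp (q ^ 2) (q ^ 2) (i + d) * qp (q ^ 2) (q ^ 2) (2 * i + d) /
          (qp (q ^ 2) (q ^ 2) (2 * (i + d)) * qp (q ^ 2) (q ^ 2) i) *
        (C (q ^ 2) ((q ^ 2) ^ (i + d))⁻¹ d).eval x := by
  rw [lowerInvEntry, if_pos (Nat.le_add_right i d), Nat.add_sub_cancel_left,
    show i + d + i = 2 * i + d by omega]

lemma lowerEntry_add_one (hq : ¬IsOfFinOrder (q ^ 2)) (hC : IsUltra C) (x : ℂ) (k : ℕ) :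
    (1 - q ^ 2) * (1 - (q ^ 2) ^ (2 * k + 2)) * lowerEntry q C x (k + 1) k =
      2 * x * q * (1 - (q ^ 2) ^ (k + 1)) ^ 2 := by
  have h₁ := one_sub_pow_ne_zero hq (m := 2 * k + 1 + 1) (by omega)
  have h₂ := qp_self_ne_zero hq (2 * k + 1)
  have h₃ := qp_self_ne_zero hq k
  rw [lowerEntry_add, qp_self_succ _ k, qp_self_succ _ (2 * k + 1)]
  field_simp
  linear_combination q * (1 - (q ^ 2) ^ (k + 1)) * hC.eval_one hq ((q ^ 2) ^ (k + 1)) x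

lemma lowerEntry_add_two (hq : ¬IsOfFinOrder (q ^ 2)) (hC : IsUltra C) (x : ℂ) (k d : ℕ) :
    (1 - (q ^ 2) ^ (d + 2)) * (1 - (q ^ 2) ^ (2 * k + d + 3)) * lowerEntry q C x (k + (d + 2)) k =
      q * (1 - (q ^ 2) ^ (k + d + 2)) *
        (2 * x * (1 - (q ^ 2) ^ (k + d + 2)) * lowerEntry q C x (k + (d + 1)) k -
          q * (1 - (q ^ 2) ^ (k + d + 1)) * lowerEntry q C x (k + d) k) := by
  have h₁ := one_sub_pow_ne_zero hq (m := 2 * k + 1 + d + 1) (by omega)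
  have h₂ := one_sub_pow_ne_zero hq (m := 2 * k + 1 + d + 1 + 1) (by omega)
  have h₃ := qp_self_ne_zero hq (2 * k + 1 + d)
  have h₄ := qp_self_ne_zero hq k
  have hC₂ := hC.eval_add_two hq ((q ^ 2) ^ (k + 1)) x d
  rw [lowerEntry_add, lowerEntry_add, lowerEntry_add, ← add_assoc k, ← add_assoc k,
    qp_self_succ _ (k + d + 1), qp_self_succ _ (k + d), ← add_assoc _ d, ← add_assoc _ d,
    qp_self_succ _ (2 * k + 1 + d + 1), qp_self_succ _ (2 * k + 1 + d)]
  have hd := one_sub_pow_ne_zero hq (d + 1).succ_ne_zero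
  rw [mul_right_comm, eq_div_of_mul_eq hd (mul_comm _ _ |>.trans hC₂)]
  field_simp
  ring

lemma lowerInvEntry_add_one (hq0 : q ≠ 0) (hq : ¬IsOfFinOrder (q ^ 2)) (hC : IsUltra C) (x : ℂ)
    (i : ℕ) :
    q * (1 - (q ^ 2)⁻¹) * (1 - (q ^ 2) ^ (2 * i + 2)) * lowerInvEntry q C x (i + 1) i =
      2 * x * (1 - (q ^ 2) ^ (i + 1)) ^ 2 := by
  have h₁ := one_sub_pow_ne_zero hq (m := 2 * i + 1 + 1) (by omega)
  have h₂ := qp_self_ne_zero hq (2 * i + 1)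
  have h₃ := qp_self_ne_zero hq i
  have hC₁ := hC.eval_one hq ((q ^ 2) ^ (i + 1))⁻¹ x
  rw [lowerInvEntry_add, qp_self_succ _ i, show 2 * (i + 1) = 2 * i + 1 + 1 by omega,
    qp_self_succ _ (2 * i + 1)]
  field_simp at hC₁ ⊢
  linear_combination (-(1 - (q ^ 2) ^ (i + 1))) * hC₁

lemma lowerInvEntry_add_two (hq0 : q ≠ 0) (hq : ¬IsOfFinOrder (q ^ 2)) (hC : IsUltra C) (x : ℂ)
    (i d : ℕ) :
    q ^ 2 * (1 - ((q ^ 2) ^ (d + 2))⁻¹) * (1 - (q ^ 2) ^ (2 * i + d + 3)) *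
        lowerInvEntry q C x (i + (d + 2)) i =
      (1 - (q ^ 2) ^ (i + 1)) *
        (2 * x * q * (1 - (q ^ 2) ^ (i + 1)) * lowerInvEntry q C x (i + 1 + (d + 1)) (i + 1) -
          (1 - (q ^ 2) ^ (i + 2)) * lowerInvEntry q C x (i + 2 + d) (i + 2)) := by
  have h₁ := one_sub_pow_ne_zero hq (m := 2 * i + d + 2 + 1) (by omega)
  have h₂ := one_sub_pow_ne_zero hq i.succ_ne_zero
  have h₅ := one_sub_pow_ne_zero hq (i + 1).succ_ne_zero
  have h₃ := qp_self_ne_zero hq i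
  have h₄ := qp_self_ne_zero hq (2 * (i + d + 2))
  have hC₂ := hC.eval_add_two hq ((q ^ 2) ^ (i + d + 2))⁻¹ x d
  rw [lowerInvEntry_add, lowerInvEntry_add, lowerInvEntry_add,
    show i + (d + 2) = i + d + 2 by omega, show i + 1 + (d + 1) = i + d + 2 by omega,
    show i + 2 + d = i + d + 2 by omega, show 2 * (i + 1) + (d + 1) = 2 * i + d + 2 + 1 by omega,
    show 2 * (i + 2) + d = 2 * i + d + 2 + 1 + 1 by omega,
    show 2 * i + (d + 2) = 2 * i + d + 2 by omega, qp_self_succ _ (2 * i + d + 2 + 1),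
    qp_self_succ _ (2 * i + d + 2), qp_self_succ _ (i + 1), qp_self_succ _ i]
  have hd := one_sub_pow_ne_zero hq (d + 1).succ_ne_zero
  rw [eq_div_of_mul_eq hd (mul_comm _ _ |>.trans hC₂)]
  field_simp
  ring

lemma lowerEntry_succ (hq0 : q ≠ 0) (hq : ¬IsOfFinOrder (q ^ 2)) (hC : IsUltra C) (x : ℂ)
    (m k : ℕ) :
    (1 - (q ^ 2) ^ (m + 1) * ((q ^ 2) ^ k)⁻¹) * (1 - (q ^ 2) ^ (m + k + 2)) *
        lowerEntry q C x (m + 1) k =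
      q * (1 - (q ^ 2) ^ (m + 1)) * (2 * x * (1 - (q ^ 2) ^ (m + 1)) * lowerEntry q C x m k -
        q * (1 - (q ^ 2) ^ m) * lowerEntry q C x (m - 1) k) := by
  have hp (n : ℕ) : (q ^ 2) ^ n ≠ 0 := pow_ne_zero n (pow_ne_zero 2 hq0)
  rcases lt_trichotomy (m + 1) k with h | rfl | h
  · rw [lowerEntry_of_lt x h, lowerEntry_of_lt (m := m) x (by omega),
      lowerEntry_of_lt (m := m - 1) x (by omega)]
    ring
  · rw [lowerEntry_of_lt (m := m) x (by omega), lowerEntry_of_lt (m := m - 1) x (by omega),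
      mul_inv_cancel₀ (hp _)]
    ring
  rcases (Nat.lt_succ_iff.mp h).eq_or_lt with rfl | h
  · have hlow : (1 - (q ^ 2) ^ k) * lowerEntry q C x (k - 1) k = 0 := by
      rcases k with _ | k
      · rw [pow_zero, sub_self, zero_mul]
      · rw [lowerEntry_of_lt x (by omega), mul_zero]
    rw [mul_assoc q (1 - (q ^ 2) ^ k), hlow, lowerEntry_self hq hC, pow_succ',
      mul_inv_cancel_right₀ (hp k), ← two_mul k, ← pow_succ']
    linear_combination lowerEntry_add_one hq hC x k
  · obtain ⟨d, rfl⟩ := Nat.exists_eq_add_of_lt h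
    have key := lowerEntry_add_two hq hC x k d
    rw [show k + d + 1 - 1 = k + d by omega, show k + d + 1 + 1 = d + 2 + k by omega, pow_add,
      mul_inv_cancel_right₀ (hp k), show k + d + 1 + k + 2 = 2 * k + d + 3 by omega, ← pow_add,
      show d + 2 + k = k + (d + 2) by omega, add_assoc k d 1]
    linear_combination key

lemma lowerInvEntry_succ (hq0 : q ≠ 0) (hq : ¬IsOfFinOrder (q ^ 2)) (hC : IsUltra C) (x : ℂ)
    (k i : ℕ) :
    q ^ 2 * (1 - (q ^ 2) ^ i * ((q ^ 2) ^ k)⁻¹) * (1 - (q ^ 2) ^ (i + k + 1)) *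
        lowerInvEntry q C x k i =
      (1 - (q ^ 2) ^ (i + 1)) *
        (2 * x * q * (1 - (q ^ 2) ^ (i + 1)) * lowerInvEntry q C x k (i + 1) -
          (1 - (q ^ 2) ^ (i + 2)) * lowerInvEntry q C x k (i + 2)) := by
  have hp (n : ℕ) : (q ^ 2) ^ n ≠ 0 := pow_ne_zero n (pow_ne_zero 2 hq0)
  have hcancel (d : ℕ) : (q ^ 2) ^ i * ((q ^ 2) ^ (i + d))⁻¹ = ((q ^ 2) ^ d)⁻¹ := by
    rw [pow_add, mul_inv, mul_inv_cancel_left₀ (hp i)]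
  rcases lt_or_ge k i with h | h
  · rw [lowerInvEntry_of_lt x h, lowerInvEntry_of_lt x (h.trans (by omega)),
      lowerInvEntry_of_lt (i := i + 2) x (h.trans (by omega))]
    ring
  obtain ⟨_ | _ | d, rfl⟩ := Nat.exists_eq_add_of_le h
  · rw [lowerInvEntry_of_lt (i := k + 1) x (by omega),
      lowerInvEntry_of_lt (i := k + 2) x (by omega), mul_inv_cancel₀ (hp k)]
    ring
  · have key := lowerInvEntry_add_one hq0 hq hC x i
    rw [lowerInvEntry_of_lt (i := i + 2) x (by omega), zero_add, lowerInvEntry_self hq hC, hcancel,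
      pow_one, show i + (i + 1) + 1 = 2 * i + 2 by omega]
    linear_combination q * key
  · have key := lowerInvEntry_add_two hq0 hq hC x i d
    rw [show i + 1 + (d + 1) = i + (d + 2) by omega, show i + 2 + d = i + (d + 2) by omega] at key
    rw [hcancel, show i + (i + (d + 1 + 1)) + 1 = 2 * i + d + 3 by omega]
    exact key

/-- The eigenvalue `p⁻ᵐ + pᵐ⁺¹` of the band matrix `lowerBand` when `p = q²`. -/
def bandEigenvalue (p : ℂ) (m : ℕ) : ℂ := (p ^ m)⁻¹ + p ^ (m + 1)

lemma bandEigenvalue_sub {p : ℂ} (hp : p ≠ 0) (m k : ℕ) :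
    bandEigenvalue p m - bandEigenvalue p k =
      (p ^ m)⁻¹ * (1 - p ^ m * (p ^ k)⁻¹) * (1 - p ^ (m + k + 1)) := by
  have h₁ := pow_ne_zero m hp
  have h₂ := pow_ne_zero k hp
  simp only [bandEigenvalue]
  field_simp
  ring

lemma bandEigenvalue_injective {p : ℂ} (hp0 : p ≠ 0) (hp : ¬IsOfFinOrder p) :
    Function.Injective (bandEigenvalue p) := by
  intro k m h
  by_contra hne
  wlog hkm : k < m generalizing k m with H
  · exact H h.symm (Ne.symm hne) (by omega)
  have key := bandEigenvalue_sub hp0 m k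
  rw [← h, sub_self, eq_comm, mul_eq_zero, mul_eq_zero] at key
  rcases key with (h₀ | h₀) | h₀
  · exact inv_ne_zero (pow_ne_zero m hp0) h₀
  · exact pow_ne_pow_of_lt hp0 hp hkm (eq_of_div_eq_one (sub_eq_zero.mp h₀).symm)
  · exact one_sub_pow_ne_zero hp (Nat.succ_ne_zero _) h₀

/-- The lower triangular band matrix for which the columns of `Lm` are right eigenvectors and the
rows of `Linv` are left eigenvectors, both with eigenvalues `bandEigenvalue`. -/
def lowerBand (q x : ℂ) (L : ℕ) : Matrix (Fin (L + 1)) (Fin (L + 1)) ℂ :=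
  Matrix.of fun m i =>
    (if m = i then bandEigenvalue (q ^ 2) i else 0) -
      (if (m : ℕ) = i + 1 then
        2 * x * q * ((q ^ 2) ^ (i + 1 : ℕ))⁻¹ * (1 - (q ^ 2) ^ (i + 1 : ℕ)) ^ 2 else 0) +
      (if (m : ℕ) = i + 2 then
        q ^ 2 * ((q ^ 2) ^ (i + 2 : ℕ))⁻¹ * (1 - (q ^ 2) ^ (i + 1 : ℕ)) *
          (1 - (q ^ 2) ^ (i + 2 : ℕ)) else 0)

lemma lowerBand_mulVec (x : ℂ) {L : ℕ} (f : ℕ → ℂ) (m : Fin (L + 1)) :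
    (lowerBand q x L *ᵥ fun i => f i) m =
      bandEigenvalue (q ^ 2) m * f m -
        2 * x * q * ((q ^ 2) ^ (m : ℕ))⁻¹ * (1 - (q ^ 2) ^ (m : ℕ)) ^ 2 * f (m - 1) +
        q ^ 2 * ((q ^ 2) ^ (m : ℕ))⁻¹ * (1 - (q ^ 2) ^ (m - 1 : ℕ)) * (1 - (q ^ 2) ^ (m : ℕ)) *
          f (m - 2) := by
  have h₁ := sum_ite_eq_add (d := 1) m.is_le fun i => 2 * x * q * ((q ^ 2) ^ (i + 1))⁻¹ *
    (1 - (q ^ 2) ^ (i + 1)) ^ 2 * f i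
  have h₂ := sum_ite_eq_add (d := 2) m.is_le fun i => q ^ 2 * ((q ^ 2) ^ (i + 2))⁻¹ *
    (1 - (q ^ 2) ^ (i + 1)) * (1 - (q ^ 2) ^ (i + 2)) * f i
  simp only [mulVec, dotProduct, lowerBand, of_apply, sub_mul, add_mul, ite_mul, zero_mul,
    sum_add_distrib, sum_sub_distrib, sum_ite_eq, mem_univ, if_true, h₁, h₂]
  rcases m with ⟨_ | _ | m, hm⟩ <;> simp

lemma vecMul_lowerBand (x : ℂ) {L : ℕ} {f : ℕ → ℂ} (hf : ∀ k, L < k → f k = 0)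
    (i : Fin (L + 1)) :
    ((fun k : Fin (L + 1) => f k) ᵥ* lowerBand q x L) i =
      bandEigenvalue (q ^ 2) i * f i -
        2 * x * q * ((q ^ 2) ^ (i + 1 : ℕ))⁻¹ * (1 - (q ^ 2) ^ (i + 1 : ℕ)) ^ 2 * f (i + 1) +
        q ^ 2 * ((q ^ 2) ^ (i + 2 : ℕ))⁻¹ * (1 - (q ^ 2) ^ (i + 1 : ℕ)) *
          (1 - (q ^ 2) ^ (i + 2 : ℕ)) * f (i + 2) := by
  have hsum (d : ℕ) (c : ℂ) := sum_ite_add_eq (i := i) (d := d) (fun k => c * f k)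
    fun h => by rw [hf _ h, mul_zero]
  simp only [vecMul, dotProduct, lowerBand, of_apply, mul_comm (f _), sub_mul, add_mul, ite_mul,
    zero_mul, sum_add_distrib, sum_sub_distrib, sum_ite_eq', mem_univ, if_true, hsum]

lemma Lm_apply (x : ℂ) {L : ℕ} (m k : Fin (L + 1)) :
    Lm q L C x m k = lowerEntry q C x m k := by
  rw [Lm, of_apply, lowerEntry]
  split_ifs with h
  · rw [← Nat.cast_sub h, zpow_natCast, show 2 * (k : ℕ) + 2 = 2 * (k + 1) by ring, pow_mul]
  · rfl

lemma Linv_apply (x : ℂ) {L : ℕ} (k i : Fin (L + 1)) :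
    Linv q L C x k i = lowerInvEntry q C x k i := by
  rw [Linv, of_apply, lowerInvEntry]
  split_ifs with h
  · have hβ : q ^ (-(2 * ((k : ℕ) : ℤ))) = ((q ^ 2) ^ (k : ℕ))⁻¹ := by
      rw [_root_.zpow_neg, ← pow_mul]
      norm_cast
    have hpow : q ^ ((2 * ((k : ℕ) : ℤ) + 1) * (((k : ℕ) : ℤ) - ((i : ℕ) : ℤ))) =
        ((q ^ 2) ^ (k : ℕ) * q) ^ (k - i : ℕ) := by
      rw [← pow_mul, ← pow_succ, ← pow_mul, ← zpow_natCast]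
      push_cast [h]
      rfl
    rw [hβ, hpow]
  · rfl

lemma lowerBand_mul_Lm (hq0 : q ≠ 0) (hq : ¬IsOfFinOrder (q ^ 2)) (hC : IsUltra C) (x : ℂ)
    (L : ℕ) :
    lowerBand q x L * Lm q L C x =
      Lm q L C x * Matrix.diagonal fun k : Fin (L + 1) => bandEigenvalue (q ^ 2) k := by
  have hp : q ^ 2 ≠ 0 := pow_ne_zero 2 hq0
  ext m k
  have hcol : (lowerBand q x L * Lm q L C x) m k =
      (lowerBand q x L *ᵥ fun i : Fin (L + 1) => lowerEntry q C x i k) m := by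
    simp only [mul_apply, mulVec, dotProduct, Lm_apply]
  rw [hcol, lowerBand_mulVec x (fun i => lowerEntry q C x i k), mul_diagonal, Lm_apply]
  have hsub := bandEigenvalue_sub hp m k
  rcases m with ⟨_ | m, hm⟩
  · rcases Nat.eq_zero_or_pos k with hk | hk
    · rw [hk]
      ring
    · rw [lowerEntry_of_lt x hk]
      ring
  · have key := lowerEntry_succ hq0 hq hC x m k
    have hk₂ : m + 1 + (k : ℕ) + 1 = m + k + 2 := by omega
    simp only [Nat.add_sub_cancel, Nat.reduceSubDiff, hk₂] at hsub ⊢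
    linear_combination lowerEntry q C x (m + 1) k * hsub + ((q ^ 2) ^ (m + 1))⁻¹ * key

lemma Linv_mul_lowerBand (hq0 : q ≠ 0) (hq : ¬IsOfFinOrder (q ^ 2)) (hC : IsUltra C) (x : ℂ)
    (L : ℕ) :
    Linv q L C x * lowerBand q x L =
      (Matrix.diagonal fun k : Fin (L + 1) => bandEigenvalue (q ^ 2) k) * Linv q L C x := by
  have hp : q ^ 2 ≠ 0 := pow_ne_zero 2 hq0
  ext k i
  have hrow : (Linv q L C x * lowerBand q x L) k i =
      ((fun i : Fin (L + 1) => lowerInvEntry q C x k i) ᵥ* lowerBand q x L) i := by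
    simp only [mul_apply, vecMul, dotProduct, Linv_apply]
  rw [hrow, vecMul_lowerBand x (f := fun i => lowerInvEntry q C x k i)
    fun j hj => lowerInvEntry_of_lt x (by omega), diagonal_mul, Linv_apply]
  have hsub := bandEigenvalue_sub hp i k
  have key := lowerInvEntry_succ hq0 hq hC x k i
  have hpi : (q ^ 2) ^ (i : ℕ) ≠ 0 := pow_ne_zero _ hp
  have hinv₁ : ((q ^ 2) ^ (i + 1 : ℕ))⁻¹ * q ^ 2 = ((q ^ 2) ^ (i : ℕ))⁻¹ := by
    rw [pow_succ]
    field_simp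
  have hinv₂ : ((q ^ 2) ^ (i + 2 : ℕ))⁻¹ * q ^ 2 = ((q ^ 2) ^ (i + 1 : ℕ))⁻¹ := by
    rw [pow_succ _ (i + 1 : ℕ)]
    field_simp
  linear_combination lowerInvEntry q C x k i * hsub + ((q ^ 2) ^ (i + 1 : ℕ))⁻¹ * key -
    (1 - (q ^ 2) ^ (i : ℕ) * ((q ^ 2) ^ (k : ℕ))⁻¹) * (1 - (q ^ 2) ^ (i + k + 1 : ℕ)) *
      lowerInvEntry q C x k i * hinv₁ +
    lowerInvEntry q C x k (i + 2) * (1 - (q ^ 2) ^ (i + 1 : ℕ)) * (1 - (q ^ 2) ^ (i + 2 : ℕ)) *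
      hinv₂

lemma lowerBand_blockTriangular (x : ℂ) (L : ℕ) :
    (lowerBand q x L).BlockTriangular OrderDual.toDual := fun m i h => by
  have hmi : (m : ℕ) < i := h
  have hne : m ≠ i := fun h => hmi.ne (congrArg Fin.val h)
  rw [lowerBand, of_apply, if_neg hne, if_neg (by omega), if_neg (by omega), sub_zero, add_zero]

lemma diag_lowerBand (x : ℂ) (L : ℕ) :
    (lowerBand q x L).diag = fun m : Fin (L + 1) => bandEigenvalue (q ^ 2) m := by
  ext m
  simp [lowerBand]

theorem Lm_mul_Linv (hq0 : q ≠ 0) (hq : ¬IsOfFinOrder (q ^ 2)) (hC : IsUltra C) (x : ℂ)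
    (L : ℕ) : Lm q L C x * Linv q L C x = 1 := by
  have hcomm : Commute (lowerBand q x L) (Lm q L C x * Linv q L C x) := by
    rw [Commute, SemiconjBy, ← mul_assoc, lowerBand_mul_Lm hq0 hq hC, mul_assoc, mul_assoc,
      Linv_mul_lowerBand hq0 hq hC]
  have hLm : (Lm q L C x).BlockTriangular OrderDual.toDual := fun m k h =>
    (Lm_apply x m k).trans (lowerEntry_of_lt x h)
  have hLinv : (Linv q L C x).BlockTriangular OrderDual.toDual := fun k i h =>
    (Linv_apply x k i).trans (lowerInvEntry_of_lt x h)
  have hinj : Function.Injective (lowerBand q x L).diag := by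
    rw [diag_lowerBand]
    exact (bandEigenvalue_injective (pow_ne_zero 2 hq0) hq).comp Fin.val_injective
  refine eq_one_of_commute_of_unitriangular (lowerBand_blockTriangular x L) hinj
    (hLm.mul hLinv) (fun i => ?_) hcomm
  rw [mul_apply, sum_eq_single_of_mem i (mem_univ i), Lm_apply, Linv_apply, lowerEntry_self hq hC,
    lowerInvEntry_self hq hC, mul_one]
  intro k _ hk
  rcases hk.lt_or_gt with hk | hk
  · rw [hLinv hk, mul_zero]
  · rw [hLm hk, zero_mul]

end TriangularFactors

section Decoupling

variable {q : ℂ} {C : ℂ → ℂ → ℕ → Polynomial ℂ}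

lemma zpow_eq_sq_pow (q : ℂ) {z : ℤ} {m : ℕ} (h : z = 2 * m) : q ^ z = (q ^ 2) ^ m := by
  rw [h, ← pow_mul, ← zpow_natCast]
  push_cast
  rfl

lemma zpow_eq_inv_sq_pow (q : ℂ) {z : ℤ} {m : ℕ} (h : z = -(2 * m)) :
    q ^ z = ((q ^ 2) ^ m)⁻¹ := by
  rw [h, _root_.zpow_neg, zpow_eq_sq_pow q rfl]

/-- The constant by which the `q`-Racah polynomials are scaled in `decoupledEntry`; it makes them
equal to `1` for `n = 0`. -/
def racahScale (p : ℂ) (L k : ℕ) : ℂ :=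
  p ^ ((L + 1) * k) * qp (p ^ L)⁻¹ p k / qp (p ^ (L + 2)) p k

/-- The entry `(k, j)` of the decoupled matrix polynomial `L(x)ᵀ P_n(x)`: a product of a single
`q`-Racah and a single continuous `q`-ultraspherical polynomial. -/
def decoupledEntry (q : ℂ) (C : ℂ → ℂ → ℕ → Polynomial ℂ) (x : ℂ) (L n j k : ℕ) : ℂ :=
  racahScale (q ^ 2) L k * lowerEntry q C x (n + j) k * racah (q ^ 2) L n j k

lemma lowerEntry_eq_reverse (hq0 : q ≠ 0) (hq : ¬IsOfFinOrder (q ^ 2)) (x : ℂ) {N k : ℕ}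
    (h : k ≤ N) :
    lowerEntry q C x N k =
      (-1) ^ k * q ^ N * (q ^ 2) ^ (N * k) / q ^ k ^ 2 *
        (qp ((q ^ 2) ^ N)⁻¹ (q ^ 2) k / qp (q ^ 2) (q ^ 2) k) *
        (qp (q ^ 2) (q ^ 2) (N - k) / qp ((q ^ 2) ^ (2 * k + 2)) (q ^ 2) (N - k)) *
        (C (q ^ 2) ((q ^ 2) ^ (k + 1)) (N - k)).eval x := by
  have hrev := qp_inv_pow_mul_qp_self (pow_ne_zero 2 hq0) h
  obtain ⟨d, rfl⟩ := Nat.exists_eq_add_of_le h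
  rw [Nat.add_sub_cancel_left] at hrev ⊢
  have hadd := qp_add (q ^ 2) (q ^ 2) (2 * k + 1) d
  rw [← pow_succ'] at hadd
  have hchoose : (q ^ 2) ^ k.choose 2 * q ^ k = q ^ k ^ 2 := by
    rw [← pow_mul, ← pow_add, Nat.mul_comm, Nat.choose_two_right, Nat.div_mul_cancel
      (Nat.even_mul_pred_self k).two_dvd]
    congr 1
    rcases k with _ | k
    · rfl
    · rw [Nat.add_sub_cancel]
      ring
  have h₁ := qp_self_ne_zero hq k
  have h₂ := qp_self_ne_zero hq (2 * k + 1)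
  have h₃ := qp_pow_ne_zero hq (k := 2 * k + 2) (by omega) d
  have hqk : q ^ k ≠ 0 := pow_ne_zero k hq0
  have hscalar : (-1) ^ k * q ^ (k + d) * (q ^ 2) ^ ((k + d) * k) / q ^ k ^ 2 *
      (qp ((q ^ 2) ^ (k + d))⁻¹ (q ^ 2) k * qp (q ^ 2) (q ^ 2) d) =
        q ^ d * qp (q ^ 2) (q ^ 2) (k + d) := by
    rw [hrev, ← hchoose, neg_pow (_⁻¹), inv_pow, ← pow_mul _ _ k, pow_add q]
    field_simp
    rw [← pow_mul, mul_comm k 2, pow_mul, neg_one_sq, one_pow, one_mul]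
  rw [lowerEntry_add, hadd, ← hscalar]
  field_simp

lemma zpow_Pm_exponent (hq0 : q ≠ 0) (L n j : ℕ) {i k : ℕ} (h : i ≤ k) :
    q ^ ((n : ℤ) + (2 * (k : ℤ) + 1) * ((k : ℤ) - (i : ℤ)) + (j : ℤ) * (2 * (k : ℤ) + 1) +
        2 * (k : ℤ) * ((L : ℤ) + (n : ℤ) + 1) - (k : ℤ) ^ 2) =
      ((q ^ 2) ^ k * q) ^ (k - i) *
        (q ^ (n + j) * (q ^ 2) ^ ((n + j) * k) / q ^ k ^ 2 * (q ^ 2) ^ ((L + 1) * k)) := by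
  obtain ⟨d, rfl⟩ := Nat.exists_eq_add_of_le h
  rw [Nat.add_sub_cancel_left, div_mul_eq_mul_div, ← mul_div_assoc, eq_div_iff (by positivity),
    ← zpow_natCast q ((i + d) ^ 2), ← zpow_add₀ hq0]
  simp only [← pow_mul, ← pow_add, ← pow_succ]
  rw [← zpow_natCast]
  congr 1
  push_cast
  ring

lemma evP_apply (hq0 : q ≠ 0) (hq : ¬IsOfFinOrder (q ^ 2)) (L n : ℕ) (x : ℂ)
    (i j : Fin (L + 1)) :
    evP q L C n x i j = ∑ k ∈ Icc (i : ℕ) (min L (n + j)),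
      lowerInvEntry q C x k i * decoupledEntry q C x L n j k := by
  rw [evP, map_apply, Pm, of_apply, eval_finsetSum]
  refine sum_congr rfl fun k hk => ?_
  obtain ⟨hik, hk⟩ := mem_Icc.mp hk
  rw [eval_mul, eval_mul, eval_C, zpow_Pm_exponent hq0 L n j hik,
    zpow_eq_inv_sq_pow q (m := L) rfl, zpow_eq_inv_sq_pow q (m := n + j) (by push_cast; ring),
    zpow_eq_sq_pow q (m := L + 2) (by push_cast; ring),
    zpow_eq_sq_pow q (m := 2 * k + 2) (by push_cast; ring),
    zpow_eq_inv_sq_pow q (m := n + j + 1) (by push_cast; ring),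
    zpow_eq_inv_sq_pow q (m := L + 1) (by push_cast; ring),
    zpow_eq_inv_sq_pow q (m := k) rfl, zpow_eq_sq_pow q (m := k + 1) (by push_cast; ring),
    qRacah_eq_racah (pow_ne_zero 2 hq0), lowerInvEntry, if_pos hik, decoupledEntry, racahScale,
    lowerEntry_eq_reverse hq0 hq x (hk.trans (min_le_right _ _))]
  ring

/-- The decoupled matrix polynomial `L(x)ᵀ P_n(x)`. -/
def decoupled (q : ℂ) (C : ℂ → ℂ → ℕ → Polynomial ℂ) (L n : ℕ) (x : ℂ) :
    Matrix (Fin (L + 1)) (Fin (L + 1)) ℂ :=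
  Matrix.of fun k j => decoupledEntry q C x L n j k

theorem evP_eq_transpose_Linv_mul (hq0 : q ≠ 0) (hq : ¬IsOfFinOrder (q ^ 2)) (L n : ℕ) (x : ℂ) :
    evP q L C n x = (Linv q L C x)ᵀ * decoupled q C L n x := by
  ext i j
  simp only [evP_apply hq0 hq, mul_apply, transpose_apply, Linv_apply, decoupled, of_apply]
  rw [Fin.sum_univ_eq_sum_range fun k => lowerInvEntry q C x k i * decoupledEntry q C x L n j k]
  refine sum_subset (fun k hk => ?_) fun k hk hk' => ?_
  · rw [mem_Icc] at hk
    rw [mem_range]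
    omega
  · rw [mem_range] at hk
    rw [mem_Icc] at hk'
    rcases lt_or_ge k i with h | h
    · rw [lowerInvEntry_of_lt x h, zero_mul]
    · rw [decoupledEntry, lowerEntry_of_lt x (by omega)]
      ring

lemma decoupled_zero (hq0 : q ≠ 0) (hq : ¬IsOfFinOrder (q ^ 2)) (L : ℕ) (x : ℂ) :
    decoupled q C L 0 x = (Lm q L C x)ᵀ := by
  ext k j
  rw [decoupled, of_apply, transpose_apply, Lm_apply, decoupledEntry, zero_add, mul_right_comm]
  rcases lt_or_ge (j : ℕ) k with h | h
  · rw [lowerEntry_of_lt x h, mul_zero]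
  · rw [racahScale, normalized_racah_zero (pow_ne_zero 2 hq0) hq h k.is_le, one_mul]

lemma evP_zero (hq0 : q ≠ 0) (hq : ¬IsOfFinOrder (q ^ 2)) (hC : IsUltra C) (L : ℕ) (x : ℂ) :
    evP q L C 0 x = 1 := by
  rw [evP_eq_transpose_Linv_mul hq0 hq, decoupled_zero hq0 hq, ← transpose_mul,
    Lm_mul_Linv hq0 hq hC, transpose_one]

lemma one_sub_pow_mul_lowerEntry_pred_add (x : ℂ) (a b k : ℕ) :
    (1 - (q ^ 2) ^ a) * lowerEntry q C x (a - 1 + b) k =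
      (1 - (q ^ 2) ^ a) * lowerEntry q C x (a + b - 1) k := by
  rcases a with _ | a
  · rw [pow_zero, sub_self, zero_mul, zero_mul]
  · rw [add_right_comm, Nat.add_sub_cancel, Nat.add_sub_cancel]

lemma lowerEntry_mul_racah_lowering (hq0 : q ≠ 0) (hq : ¬IsOfFinOrder (q ^ 2)) (x : ℂ)
    (n j l k : ℕ) :
    lowerEntry q C x (n + j - 1) k *
        ((1 - (q ^ 2) ^ (n + j)) * (1 - (q ^ 2) ^ (l + n + 1)) * racah (q ^ 2) (j + l) n j k) =
      lowerEntry q C x (n + j - 1) k *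
        ((q ^ 2) ^ n * (1 - (q ^ 2) ^ j) * (1 - (q ^ 2) ^ (l + 1)) *
            racah (q ^ 2) (j + l) n (j - 1) k +
          (1 - (q ^ 2) ^ n) * (1 - (q ^ 2) ^ (j + l + n + 1)) *
            racah (q ^ 2) (j + l) (n - 1) j k) := by
  rcases lt_or_ge k (n + j) with h | h
  · rw [racah_lowering (pow_ne_zero 2 hq0) hq h]
  rcases Nat.eq_zero_or_pos (n + j) with h₀ | h₀
  · obtain ⟨rfl, rfl⟩ := Nat.add_eq_zero_iff.mp h₀
    ring
  · rw [lowerEntry_of_lt x (by omega), zero_mul, zero_mul]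

lemma decoupledEntry_recurrence (hq0 : q ≠ 0) (hq : ¬IsOfFinOrder (q ^ 2)) (hC : IsUltra C)
    (x : ℂ) (n j l : ℕ) {k : ℕ} (hk : k ≤ j + l) :
    2 * x * q * (1 - (q ^ 2) ^ (n + j + 1)) * (1 - (q ^ 2) ^ (l + n + 1)) *
        decoupledEntry q C x (j + l) n j k =
      (1 - (q ^ 2) ^ (n + 1)) * (1 - (q ^ 2) ^ (j + l + n + 2)) *
          decoupledEntry q C x (j + l) (n + 1) j k +
        (q ^ 2) ^ (n + 1) * (1 - (q ^ 2) ^ l) * (1 - (q ^ 2) ^ (j + 1)) *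
          decoupledEntry q C x (j + l) n (j + 1) k +
        (q ^ 2) ^ (n + 1) * (1 - (q ^ 2) ^ j) * (1 - (q ^ 2) ^ (l + 1)) *
          decoupledEntry q C x (j + l) n (j - 1) k +
        q ^ 2 * (1 - (q ^ 2) ^ n) * (1 - (q ^ 2) ^ (j + l + n + 1)) *
          decoupledEntry q C x (j + l) (n - 1) j k := by
  rcases lt_or_ge (n + j + 1) k with h | h
  · simp only [decoupledEntry]
    rw [lowerEntry_of_lt (m := n + j) x (by omega), lowerEntry_of_lt (m := n + 1 + j) x (by omega),
      lowerEntry_of_lt (m := n + (j + 1)) x (by omega),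
      lowerEntry_of_lt (m := n + (j - 1)) x (by omega),
      lowerEntry_of_lt (m := n - 1 + j) x (by omega)]
    ring
  have hraise := racah_raising (pow_ne_zero 2 hq0) hq h hk
  have hultra := lowerEntry_succ hq0 hq hC x (n + j) k
  have hlower := lowerEntry_mul_racah_lowering (C := C) hq0 hq x n j l k
  have hj := one_sub_pow_mul_lowerEntry_pred_add (q := q) (C := C) x j n k
  have hn := one_sub_pow_mul_lowerEntry_pred_add (q := q) (C := C) x n j k
  rw [add_comm (j - 1), add_comm j] at hj
  refine mul_left_cancel₀ (one_sub_pow_ne_zero hq (m := n + j + 1) (by omega)) ?_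
  simp only [decoupledEntry, show n + 1 + j = n + j + 1 by omega, ← add_assoc]
  linear_combination racahScale (q ^ 2) (j + l) k *
    (lowerEntry q C x (n + j + 1) k * hraise -
      (1 - (q ^ 2) ^ (l + n + 1)) * racah (q ^ 2) (j + l) n j k * hultra +
      (1 - (q ^ 2) ^ (n + j + 1)) * q ^ 2 * (hlower -
        (q ^ 2) ^ n * (1 - (q ^ 2) ^ (l + 1)) * racah (q ^ 2) (j + l) n (j - 1) k * hj -
        (1 - (q ^ 2) ^ (j + l + n + 1)) * racah (q ^ 2) (j + l) (n - 1) j k * hn))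

end Decoupling

section Recurrence

variable {q : ℂ} {C : ℂ → ℂ → ℕ → Polynomial ℂ}

/-- The diagonal entry of `Γ_n` at `j`, where `l = L - j`. -/
def gamEntry (q : ℂ) (n j l : ℕ) : ℂ :=
  2 ^ n * q ^ n * qp ((q ^ 2) ^ (j + 1)) (q ^ 2) n * qp ((q ^ 2) ^ (l + 1)) (q ^ 2) n /
    (qp (q ^ 2) (q ^ 2) n * qp ((q ^ 2) ^ (j + l + 2)) (q ^ 2) n)

lemma Gam_eq_diagonal (q : ℂ) (L n : ℕ) :
    Gam q L n = Matrix.diagonal fun i : Fin (L + 1) => gamEntry q n i (L - i) := by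
  rw [Gam]
  congr 1
  funext i
  have hi := i.is_le
  rw [gamEntry, zpow_eq_sq_pow q (m := i + 1) (by push_cast; ring),
    zpow_eq_sq_pow q (m := L - i + 1) (by omega),
    zpow_eq_sq_pow q (m := L + 2) (by push_cast; ring), Nat.add_sub_cancel' hi]

lemma gamEntry_ne_zero (hq0 : q ≠ 0) (hq : ¬IsOfFinOrder (q ^ 2)) (n j l : ℕ) :
    gamEntry q n j l ≠ 0 := by
  have h₁ := qp_pow_ne_zero hq j.succ_ne_zero n
  have h₂ := qp_pow_ne_zero hq l.succ_ne_zero n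
  have h₃ := qp_pow_ne_zero hq (j + l + 1).succ_ne_zero n
  have h₄ := qp_self_ne_zero hq n
  exact div_ne_zero (by positivity) (mul_ne_zero h₄ h₃)

lemma gamEntry_comm (q : ℂ) (n j l : ℕ) : gamEntry q n j l = gamEntry q n l j := by
  rw [gamEntry, gamEntry, mul_right_comm, add_comm j l]

lemma gamEntry_succ (hq : ¬IsOfFinOrder (q ^ 2)) (n j l : ℕ) :
    (1 - (q ^ 2) ^ (n + 1)) * (1 - (q ^ 2) ^ (j + l + n + 2)) * gamEntry q (n + 1) j l =
      2 * q * (1 - (q ^ 2) ^ (n + j + 1)) * (1 - (q ^ 2) ^ (l + n + 1)) * gamEntry q n j l := by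
  have h₁ := one_sub_pow_ne_zero hq n.succ_ne_zero
  have h₂ := one_sub_pow_ne_zero hq (m := j + l + 2 + n) (by omega)
  have h₃ := qp_pow_ne_zero hq (j + l + 1).succ_ne_zero n
  have h₄ := qp_self_ne_zero hq n
  simp only [gamEntry, qp_succ _ _ n, ← pow_add, ← pow_succ']
  field_simp
  ring

lemma gamEntry_shift (n j l : ℕ) :
    (1 - (q ^ 2) ^ (j + 1)) * (1 - (q ^ 2) ^ (n + l + 1)) * gamEntry q n (j + 1) l =
      (1 - (q ^ 2) ^ (n + j + 1)) * (1 - (q ^ 2) ^ (l + 1)) * gamEntry q n j (l + 1) := by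
  have hshift (m : ℕ) := one_sub_mul_qp_mul ((q ^ 2) ^ (m + 1)) (q ^ 2) n
  simp only [← pow_succ', ← pow_add] at hshift
  rw [gamEntry, gamEntry, show j + 1 + l = j + (l + 1) by omega]
  have hj := hshift j
  have hl := hshift l
  rw [← mul_div_assoc, ← mul_div_assoc]
  congr 1
  rw [add_right_comm] at hj hl
  rw [add_comm n l, add_comm n j]
  linear_combination
    2 ^ n * q ^ n * (1 - (q ^ 2) ^ (l + n + 1)) * qp ((q ^ 2) ^ (l + 1)) (q ^ 2) n * hj -
    2 ^ n * q ^ n * (1 - (q ^ 2) ^ (j + n + 1)) * qp ((q ^ 2) ^ (j + 1)) (q ^ 2) n * hl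

/-- The off-diagonal entries of `X_n`: its entry `(j - 1, j)` for `m = j` and its entry
`(j + 1, j)` for `m = L - j`. -/
def offDiagCoeff (q : ℂ) (n m : ℕ) : ℂ :=
  q ^ (2 * n + 1) / 2 * (1 - (q ^ 2) ^ m) ^ 2 /
    ((1 - (q ^ 2) ^ (n + m)) * (1 - (q ^ 2) ^ (n + m + 1)))

lemma offDiagCoeff_zero (q : ℂ) (n : ℕ) : offDiagCoeff q n 0 = 0 := by
  simp [offDiagCoeff]

lemma Xmat_apply (q : ℂ) {L : ℕ} (n : ℕ) (i j : Fin (L + 1)) :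
    Xmat q L n i j =
      (if (j : ℕ) = i + 1 then offDiagCoeff q n j else 0) +
        if (i : ℕ) = j + 1 then offDiagCoeff q n (L - j) else 0 := by
  have hi := i.is_le
  rw [Xmat, of_apply]
  split_ifs with h₁ h₂ h₂
  · omega
  · rw [offDiagCoeff, zpow_eq_sq_pow q (m := j) (by omega),
      zpow_eq_sq_pow q (m := n + j) (by omega), zpow_eq_sq_pow q (m := n + j + 1) (by omega),
      add_zero]
  · rw [offDiagCoeff, zpow_eq_sq_pow q (m := L - j) (by omega),
      zpow_eq_sq_pow q (m := n + (L - j)) (by omega),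
      zpow_eq_sq_pow q (m := n + (L - j) + 1) (by omega), zero_add]
  · rw [add_zero]

lemma sum_mul_Xmat (q : ℂ) {L : ℕ} (n : ℕ) (f : ℕ → ℂ) (j : Fin (L + 1)) :
    ∑ i : Fin (L + 1), f i * Xmat q L n i j =
      f (j - 1) * offDiagCoeff q n j + f (j + 1) * offDiagCoeff q n (L - j) := by
  have h₁ := sum_ite_eq_add (d := 1) j.is_le fun i => f i * offDiagCoeff q n j
  have h₂ := sum_ite_add_eq (L := L) (i := j) (d := 1)
    (fun i => f i * offDiagCoeff q n (L - j)) fun h => by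
      rw [Nat.sub_eq_zero_of_le (by omega), offDiagCoeff_zero, mul_zero]
  simp only [Xmat_apply, mul_add, mul_ite, mul_zero, sum_add_distrib, h₁, h₂]
  split_ifs with h
  · rfl
  · rw [Nat.lt_one_iff.mp (not_le.mp h), offDiagCoeff_zero, mul_zero]

lemma offDiagCoeff_div_gamEntry (hq0 : q ≠ 0) (hq : ¬IsOfFinOrder (q ^ 2)) (n j l : ℕ) :
    2 * q * (1 - (q ^ 2) ^ (n + j + 1)) * (1 - (q ^ 2) ^ (l + n + 1)) *
        (offDiagCoeff q n l / gamEntry q n (j + 1) (l - 1)) =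
      (q ^ 2) ^ (n + 1) * (1 - (q ^ 2) ^ l) * (1 - (q ^ 2) ^ (j + 1)) / gamEntry q n j l := by
  rcases l with _ | l
  · simp [offDiagCoeff_zero]
  have h₁ := one_sub_pow_ne_zero hq (m := n + l + 1) (by omega)
  have h₂ := one_sub_pow_ne_zero hq (m := n + l + 1 + 1) (by omega)
  have h₃ := gamEntry_ne_zero hq0 hq n (j + 1) l
  have h₄ := gamEntry_ne_zero hq0 hq n j (l + 1)
  have hshift := gamEntry_shift (q := q) n j l
  rw [Nat.add_sub_cancel, offDiagCoeff, ← add_assoc n, show l + 1 + n + 1 = n + l + 1 + 1 by omega]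
  field_simp
  rw [← pow_mul]
  linear_combination -(1 - (q ^ 2) ^ (l + 1)) * q ^ (2 * n + 2) * hshift

/-- The diagonal entry of `Y_n` at `j`, where `l = L - j`. -/
def diagCoeff (q : ℂ) (n j l : ℕ) : ℂ :=
  1 / 4 * ((1 - (q ^ 2) ^ n) ^ 2 * (1 - (q ^ 2) ^ (j + l + n + 1)) ^ 2) /
    ((1 - (q ^ 2) ^ (n + j)) * (1 - (q ^ 2) ^ (l + n)) * (1 - (q ^ 2) ^ (n + j + 1)) *
      (1 - (q ^ 2) ^ (l + n + 1)))

lemma Ymat_eq_diagonal (q : ℂ) (L n : ℕ) :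
    Ymat q L n = Matrix.diagonal fun j : Fin (L + 1) => diagCoeff q n j (L - j) := by
  rw [Ymat]
  congr 1
  funext j
  have hj := j.is_le
  rw [diagCoeff, zpow_eq_sq_pow q (m := n) rfl, zpow_eq_sq_pow q (m := L + n + 1) (by omega),
    zpow_eq_sq_pow q (m := n + j) (by omega), zpow_eq_sq_pow q (m := L - j + n) (by omega),
    zpow_eq_sq_pow q (m := n + j + 1) (by omega), zpow_eq_sq_pow q (m := L - j + n + 1) (by omega),
    Nat.add_sub_cancel' hj]

lemma diagCoeff_div_gamEntry (hq0 : q ≠ 0) (hq : ¬IsOfFinOrder (q ^ 2)) (n j l : ℕ) :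
    2 * q * (1 - (q ^ 2) ^ (n + j + 1)) * (1 - (q ^ 2) ^ (l + n + 1)) *
        (diagCoeff q n j l / gamEntry q (n - 1) j l) =
      q ^ 2 * (1 - (q ^ 2) ^ n) * (1 - (q ^ 2) ^ (j + l + n + 1)) / gamEntry q n j l := by
  rcases n with _ | n
  · simp [diagCoeff]
  have h₁ := one_sub_pow_ne_zero hq (m := n + 1 + j) (by omega)
  have h₂ := one_sub_pow_ne_zero hq (m := l + (n + 1)) (by omega)
  have h₃ := one_sub_pow_ne_zero hq (m := n + 1 + j + 1) (by omega)
  have h₄ := one_sub_pow_ne_zero hq (m := l + (n + 1) + 1) (by omega)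
  have h₅ := gamEntry_ne_zero hq0 hq n j l
  have h₆ := gamEntry_ne_zero hq0 hq (n + 1) j l
  have hsucc := gamEntry_succ hq n j l
  rw [Nat.add_sub_cancel, diagCoeff]
  field_simp
  linear_combination 2 * (1 - (q ^ 2) ^ (n + 1)) * (1 - (q ^ 2) ^ (j + l + n + 2)) * hsucc

lemma normalized_decoupledEntry_recurrence (hq0 : q ≠ 0) (hq : ¬IsOfFinOrder (q ^ 2))
    (hC : IsUltra C) (x : ℂ) (n j l : ℕ) {k : ℕ} (hk : k ≤ j + l) :
    x * (decoupledEntry q C x (j + l) n j k / gamEntry q n j l) =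
      decoupledEntry q C x (j + l) (n + 1) j k / gamEntry q (n + 1) j l +
        (decoupledEntry q C x (j + l) n (j - 1) k / gamEntry q n (j - 1) (l + 1) *
            offDiagCoeff q n j +
          decoupledEntry q C x (j + l) n (j + 1) k / gamEntry q n (j + 1) (l - 1) *
            offDiagCoeff q n l) +
        decoupledEntry q C x (j + l) (n - 1) j k / gamEntry q (n - 1) j l *
          diagCoeff q n j l := by
  have hn := one_sub_pow_ne_zero hq (m := n + j + 1) (by omega)
  have hl := one_sub_pow_ne_zero hq (m := l + n + 1) (by omega)
  have hsucc := (div_eq_div_iff (gamEntry_ne_zero hq0 hq n j l)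
    (gamEntry_ne_zero hq0 hq (n + 1) j l)).mpr (gamEntry_succ hq n j l)
  have hright := offDiagCoeff_div_gamEntry hq0 hq n j l
  have hleft := offDiagCoeff_div_gamEntry hq0 hq n l j
  have hdiag := diagCoeff_div_gamEntry hq0 hq n j l
  rw [gamEntry_comm q n (l + 1), gamEntry_comm q n l] at hleft
  refine mul_left_cancel₀ (mul_ne_zero (mul_ne_zero (mul_ne_zero two_ne_zero hq0) hn) hl) ?_
  linear_combination (gamEntry q n j l)⁻¹ * decoupledEntry_recurrence hq0 hq hC x n j l hk +
    decoupledEntry q C x (j + l) (n + 1) j k * hsucc -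
    decoupledEntry q C x (j + l) n (j + 1) k * hright -
    decoupledEntry q C x (j + l) n (j - 1) k * hleft -
    decoupledEntry q C x (j + l) (n - 1) j k * hdiag

lemma decoupled_mul_inv_Gam_apply (hq0 : q ≠ 0) (hq : ¬IsOfFinOrder (q ^ 2)) (L n : ℕ) (x : ℂ)
    (k j : Fin (L + 1)) :
    (decoupled q C L n x * (Gam q L n)⁻¹) k j =
      decoupledEntry q C x L n j k / gamEntry q n j (L - j) := by
  have hinv : (Gam q L n)⁻¹ =
      Matrix.diagonal fun i : Fin (L + 1) => (gamEntry q n i (L - i))⁻¹ := by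
    refine inv_eq_right_inv ?_
    rw [Gam_eq_diagonal, diagonal_mul_diagonal, ← diagonal_one]
    congr 1
    funext i
    exact mul_inv_cancel₀ (gamEntry_ne_zero hq0 hq n i (L - i))
  rw [hinv, mul_diagonal, decoupled, of_apply, div_eq_mul_inv]

theorem decoupled_mul_inv_Gam_recurrence (hq0 : q ≠ 0) (hq : ¬IsOfFinOrder (q ^ 2))
    (hC : IsUltra C) (L n : ℕ) (x : ℂ) :
    x • (decoupled q C L n x * (Gam q L n)⁻¹) =
      decoupled q C L (n + 1) x * (Gam q L (n + 1))⁻¹ +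
        decoupled q C L n x * (Gam q L n)⁻¹ * Xmat q L n +
        decoupled q C L (n - 1) x * (Gam q L (n - 1))⁻¹ * Ymat q L n := by
  ext k j
  obtain ⟨l, hl⟩ := Nat.exists_eq_add_of_le j.is_le
  have hX := sum_mul_Xmat q n (fun i => decoupledEntry q C x L n i k / gamEntry q n i (L - i)) j
  have hleft : offDiagCoeff q n j / gamEntry q n (j - 1) (L - (j - 1)) =
      offDiagCoeff q n j / gamEntry q n (j - 1) (l + 1) := by
    rcases Nat.eq_zero_or_pos (j : ℕ) with h | h
    · rw [h, offDiagCoeff_zero, zero_div, zero_div]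
    · rw [show L - (j - 1) = l + 1 by omega]
  rw [Matrix.smul_apply, Matrix.add_apply, Matrix.add_apply, mul_apply (N := Xmat q L n),
    Ymat_eq_diagonal, mul_diagonal]
  simp only [decoupled_mul_inv_Gam_apply hq0 hq]
  have hrec := normalized_decoupledEntry_recurrence hq0 hq hC x n j l (k.is_le.trans hl.le)
  rw [← hl] at hrec
  rw [hX, smul_eq_mul, show L - (j + 1) = l - 1 by omega, show L - j = l by omega, hrec]
  linear_combination -decoupledEntry q C x L n (j - 1) k * hleft

theorem evP_mul_inv_Gam_recurrence (hq0 : q ≠ 0) (hq : ¬IsOfFinOrder (q ^ 2)) (hC : IsUltra C)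
    (L n : ℕ) (x : ℂ) :
    x • (evP q L C n x * (Gam q L n)⁻¹) =
      evP q L C (n + 1) x * (Gam q L (n + 1))⁻¹ +
        evP q L C n x * (Gam q L n)⁻¹ * Xmat q L n +
        evP q L C (n - 1) x * (Gam q L (n - 1))⁻¹ * Ymat q L n := by
  have h := congrArg ((Linv q L C x)ᵀ * ·) (decoupled_mul_inv_Gam_recurrence hq0 hq hC L n x)
  simpa only [evP_eq_transpose_Linv_mul hq0 hq, Matrix.mul_assoc, Matrix.mul_add,
    Matrix.mul_smul] using h

lemma Gam_zero (q : ℂ) (L : ℕ) : Gam q L 0 = 1 := by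
  simp [Gam, qp_zero]

lemma Ymat_zero (q : ℂ) (L : ℕ) : Ymat q L 0 = 0 := by
  simp [Ymat]

end Recurrence

theorem stmt4_general (q : ℂ) (hq0 : q ≠ 0) (hq : ¬IsOfFinOrder q) (L : ℕ)
    (C : ℂ → ℂ → ℕ → Polynomial ℂ) (hC : IsUltra C) :
    (∀ x : ℂ, evP q L C 0 x * (Gam q L 0)⁻¹ = 1) ∧
      (∀ x : ℂ,
        x • (evP q L C 0 x * (Gam q L 0)⁻¹) = evP q L C 1 x * (Gam q L 1)⁻¹ + Xmat q L 0) ∧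
      ∀ n : ℕ, 1 ≤ n → ∀ x : ℂ,
        x • (evP q L C n x * (Gam q L n)⁻¹) =
          evP q L C (n + 1) x * (Gam q L (n + 1))⁻¹ +
            evP q L C n x * (Gam q L n)⁻¹ * Xmat q L n +
            evP q L C (n - 1) x * (Gam q L (n - 1))⁻¹ * Ymat q L n := by
  have hp : ¬IsOfFinOrder (q ^ 2) := mt (fun h => h.of_pow two_ne_zero) hq
  have hinit (x : ℂ) : evP q L C 0 x * (Gam q L 0)⁻¹ = 1 := by
    rw [evP_zero hq0 hp hC, Gam_zero, inv_one, one_mul]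
  refine ⟨hinit, fun x => ?_, fun n _ x => evP_mul_inv_Gam_recurrence hq0 hp hC L n x⟩
  rw [evP_mul_inv_Gam_recurrence hq0 hp hC, Ymat_zero, mul_zero, add_zero, hinit, one_mul, zero_add]

/-- the monic polynomials `Q_n(x) = P_n(x) Γ_n⁻¹` satisfy `Q_0 = I`,
`x Q_0(x) = Q_1(x) + X_0`, and for `n ≥ 1` the three-term recurrence
`x Q_n(x) = Q_{n+1}(x) + Q_n(x) X_n + Q_{n-1}(x) Y_n`. -/
theorem stmt4 (q : ℝ) (hq0 : 0 < q) (hq1 : q < 1) (L : ℕ)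
    (C : ℂ → ℂ → ℕ → Polynomial ℂ) (hC : IsUltra C) :
    (∀ x : ℂ, evP (q : ℂ) L C 0 x * (Gam (q : ℂ) L 0)⁻¹ = 1) ∧
      (∀ x : ℂ,
        x • (evP (q : ℂ) L C 0 x * (Gam (q : ℂ) L 0)⁻¹) =
          evP (q : ℂ) L C 1 x * (Gam (q : ℂ) L 1)⁻¹ + Xmat (q : ℂ) L 0) ∧
      ∀ n : ℕ, 1 ≤ n → ∀ x : ℂ,
        x • (evP (q : ℂ) L C n x * (Gam (q : ℂ) L n)⁻¹) =
          evP (q : ℂ) L C (n + 1) x * (Gam (q : ℂ) L (n + 1))⁻¹ +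
            evP (q : ℂ) L C n x * (Gam (q : ℂ) L n)⁻¹ * Xmat (q : ℂ) L n +
            evP (q : ℂ) L C (n - 1) x * (Gam (q : ℂ) L (n - 1))⁻¹ * Ymat (q : ℂ) L n :=
  stmt4_general q (Complex.ofReal_ne_zero.mpr hq0.ne') (not_isOfFinOrder_ofReal hq0 hq1) L C hC

end
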